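/- Topological noetherianity of cubic forms (main theorem): let V = ℕ →₀ k with standard basis (e_i), and let GL_∞ be the group of k-linear automorphisms g of V for which there exists N with g(e_i) = e_i for all i ≥ N and g preserving the span of e_0,…,e_{N−1}; GL_∞ acts on symmetric trilinear forms by (g·T) = T∘(g⁻¹ × g⁻¹ × g⁻¹). A coordinate polynomial function is a function on symmetric trilinear forms of the shape T ↦ P((T(e_i,e_j,e_l))_{(i,j,l) ∈ F}) for a finite set F ⊆ ℕ³ and a polynomial P in the variables indexed by F. Suppose Z is a GL_∞-stable set of symmetric trilinear forms on V that is the common zero locus of some (arbitrary) collection of coordinate polynomial functions. Then there exist finitely many coordinate polynomial functions h₁,…,h_m such that Z = { T : h_i(g·T) = 0 for all g ∈ GL_∞ and all 1 ≤ i ≤ m }; i.e. Z is cut out by finitely many GL_∞-orbits of equations. -/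

import Mathlib

open scoped BigOperators

/-- The q-rank of a function `f : V → k`. -/
noncomputable def qrank (k : Type*) [Field k] {V : Type*} [AddCommGroup V] [Module k V]
    (f : V → k) : ℕ∞ :=
  sInf {r : ℕ∞ | ∃ m : ℕ, r = m ∧
    ∃ (ℓ : Fin m → (V →ₗ[k] k)) (q : Fin m → QuadraticForm k V),
      ∀ v, f v = ∑ i, ℓ i v * q i v}

/-- A trilinear form on `V = ℕ →₀ k` is symmetric if it is invariant under all
permutations of its three arguments. -/
def IsSymTri {k : Type*} [Field k]
    (T : MultilinearMap k (fun _ : Fin 3 => (ℕ →₀ k)) k) : Prop :=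
  ∀ (σ : Equiv.Perm (Fin 3)) (v : Fin 3 → (ℕ →₀ k)), T (v ∘ σ) = T v

/-- An automorphism of `V = ℕ →₀ k` belongs to `GL∞` if for some `N` it fixes `eᵢ`
for `i ≥ N` and preserves the span of `e₀, …, e_{N-1}`. -/
def IsGLinf {k : Type*} [Field k] (g : (ℕ →₀ k) ≃ₗ[k] (ℕ →₀ k)) : Prop :=
  ∃ N : ℕ, (∀ i, N ≤ i → g (Finsupp.single i 1) = Finsupp.single i 1) ∧
    (Submodule.span k {v : ℕ →₀ k | ∃ j < N, v = Finsupp.single j (1 : k)}).map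
        g.toLinearMap
      = Submodule.span k {v : ℕ →₀ k | ∃ j < N, v = Finsupp.single j (1 : k)}

/-- Evaluation of a coordinate polynomial function at a trilinear form: `P` is a
polynomial in the coordinates `T(eᵢ, eⱼ, eₗ)`. -/
noncomputable def coordEval {k : Type*} [Field k]
    (T : MultilinearMap k (fun _ : Fin 3 => (ℕ →₀ k)) k)
    (P : MvPolynomial (ℕ × ℕ × ℕ) k) : k :=
  MvPolynomial.eval
    (fun p => T ![Finsupp.single p.1 1, Finsupp.single p.2.1 1,
      Finsupp.single p.2.2 1]) P

namespace CubN

open MvPolynomial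

universe u

noncomputable abbrev e (k : Type u) [Field k] (i : ℕ) : ℕ →₀ k := Finsupp.single i 1

structure Form (k : Type u) [Field k] (d : ℕ) where
  toFun : Multiset (ℕ →₀ k) → k
  deg : ∀ s, Multiset.card s ≠ d → toFun s = 0
  lin : ∀ (a : k) (x y : ℕ →₀ k) (s : Multiset (ℕ →₀ k)),
    toFun ((x + a • y) ::ₘ s) = toFun (x ::ₘ s) + a * toFun (y ::ₘ s)

variable {k : Type u} [Field k]

theorem Form.add {d : ℕ} (T : Form k d) (x y : ℕ →₀ k) (s : Multiset (ℕ →₀ k)) :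
    T.toFun ((x + y) ::ₘ s) = T.toFun (x ::ₘ s) + T.toFun (y ::ₘ s) := by
  have := T.lin 1 x y s
  simpa using this

theorem Form.zero {d : ℕ} (T : Form k d) (s : Multiset (ℕ →₀ k)) :
    T.toFun (0 ::ₘ s) = 0 := by
  have := T.add 0 0 s
  simpa using this

theorem Form.smul {d : ℕ} (T : Form k d) (a : k) (y : ℕ →₀ k) (s : Multiset (ℕ →₀ k)) :
    T.toFun ((a • y) ::ₘ s) = a * T.toFun (y ::ₘ s) := by
  have := T.lin a 0 y s
  simpa [T.zero] using this

noncomputable def Form.act {d : ℕ} (T : Form k d) (φ : (ℕ →₀ k) →ₗ[k] (ℕ →₀ k)) : Form k d where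
  toFun s := T.toFun (s.map φ)
  deg s hs := T.deg _ (by simpa using hs)
  lin a x y s := by simp [T.lin]

abbrev Pt (k : Type u) [Field k] {ι : Type} (d : ι → ℕ) := ∀ i, Form k (d i)

noncomputable def act {ι : Type} {d : ι → ℕ} (x : Pt k d) (φ : (ℕ →₀ k) →ₗ[k] (ℕ →₀ k)) : Pt k d :=
  fun i => (x i).act φ

theorem act_apply {ι : Type} {d : ι → ℕ} (x : Pt k d) (φ : (ℕ →₀ k) →ₗ[k] (ℕ →₀ k)) (i : ι)
    (s : Multiset (ℕ →₀ k)) : (act x φ i).toFun s = (x i).toFun (s.map φ) := rfl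

theorem act_act {ι : Type} {d : ι → ℕ} (x : Pt k d) (φ ψ : (ℕ →₀ k) →ₗ[k] (ℕ →₀ k)) :
    act (act x φ) ψ = act x (φ ∘ₗ ψ) := by
  funext i
  simp [act, Form.act, Multiset.map_map]

theorem act_id {ι : Type} {d : ι → ℕ} (x : Pt k d) : act x LinearMap.id = x := by
  funext i
  simp [act, Form.act]

noncomputable def ev {ι : Type} {d : ι → ℕ} (x : Pt k d) :
    MvPolynomial (ι × Multiset ℕ) k →ₐ[k] k :=
  aeval (fun p => (x p.1).toFun (p.2.map (e k)))

theorem ev_X {ι : Type} {d : ι → ℕ} (x : Pt k d) (p : ι × Multiset ℕ) :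
    ev x (X p) = (x p.1).toFun (p.2.map (e k)) := by simp [ev]

theorem coord_vec {ι : Type} {d : ι → ℕ} (j : ι) (s : Multiset (ℕ →₀ k)) :
    ∀ m : Multiset ℕ, ∃ p : MvPolynomial (ι × Multiset ℕ) k, ∀ y : Pt k d,
      ev y p = (y j).toFun (m.map (e k) + s) := by
  induction s using Multiset.induction_on with
  | empty => intro m; exact ⟨X (j, m), fun y => by simp [ev_X]⟩
  | cons v s ih =>
    induction v using Finsupp.induction_linear with
    | zero => intro m; exact ⟨0, fun y => by simp [Form.zero]⟩
    | add f g hf hg =>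
      intro m
      obtain ⟨p, hp⟩ := hf m
      obtain ⟨p', hp'⟩ := hg m
      refine ⟨p + p', fun y => ?_⟩
      rw [map_add, hp, hp']
      simp [Form.add]
    | single a b =>
      intro m
      obtain ⟨p, hp⟩ := ih (a ::ₘ m)
      refine ⟨C b * p, fun y => ?_⟩
      rw [map_mul, hp]
      have : (Finsupp.single a b : ℕ →₀ k) = b • e k a := by simp [e]
      rw [this, Multiset.add_cons, Form.smul]
      simp [ev]

theorem coord_vec' {ι : Type} (d : ι → ℕ) (j : ι) (s : Multiset (ℕ →₀ k)) :
    ∃ p : MvPolynomial (ι × Multiset ℕ) k, ∀ y : Pt k d, ev y p = (y j).toFun s := by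
  obtain ⟨p, hp⟩ := coord_vec (d := d) j s 0
  exact ⟨p, fun y => by simpa using hp y⟩

theorem ev_act {ι : Type} (d : ι → ℕ) (φ : (ℕ →₀ k) →ₗ[k] (ℕ →₀ k))
    (f : MvPolynomial (ι × Multiset ℕ) k) :
    ∃ f' : MvPolynomial (ι × Multiset ℕ) k, ∀ x : Pt k d, ev x f' = ev (act x φ) f := by
  choose g hg using fun p : ι × Multiset ℕ =>
    coord_vec' (k := k) d p.1 ((p.2.map (e k)).map φ)
  refine ⟨aeval g f, fun x => ?_⟩
  have : (ev x).comp (aeval g) = ev (act x φ) := by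
    apply MvPolynomial.algHom_ext
    intro p
    simp only [AlgHom.comp_apply, aeval_X, ev_X, hg]
    rfl
  rw [← this]; rfl

theorem ev_bound {ι : Type} (d : ι → ℕ) (f : MvPolynomial (ι × Multiset ℕ) k) :
    ∃ n, ∀ (x : Pt k d) (φ ψ : (ℕ →₀ k) →ₗ[k] (ℕ →₀ k)), (∀ i < n, φ (e k i) = ψ (e k i)) →
      ev (act x φ) f = ev (act x ψ) f := by
  induction f using MvPolynomial.induction_on with
  | C a => exact ⟨0, fun x φ ψ _ => by simp [ev]⟩
  | add p q hp hq =>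
    obtain ⟨n, hn⟩ := hp
    obtain ⟨m, hm⟩ := hq
    refine ⟨max n m, fun x φ ψ h => ?_⟩
    rw [map_add, map_add, hn x φ ψ (fun i hi => h i (lt_max_of_lt_left hi)),
      hm x φ ψ (fun i hi => h i (lt_max_of_lt_right hi))]
  | mul_X p q hp =>
    obtain ⟨n, hn⟩ := hp
    refine ⟨max n (q.2.sup + 1), fun x φ ψ h => ?_⟩
    rw [map_mul, map_mul, hn x φ ψ (fun i hi => h i (lt_max_of_lt_left hi)), ev_X, ev_X,
      act_apply, act_apply]
    congr 2
    rw [Multiset.map_map, Multiset.map_map]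
    apply Multiset.map_congr rfl
    intro i hi
    exact h i (lt_max_of_lt_right (Nat.lt_succ_of_le (Multiset.le_sup hi)))

structure CS {ι : Type} {d : ι → ℕ} (Z : Set (Pt k d)) : Prop where
  closed : ∀ x, (∀ f, (∀ z ∈ Z, ev z f = 0) → ev x f = 0) → x ∈ Z
  stable : ∀ x ∈ Z, ∀ φ, act x φ ∈ Z

def Noeth {ι : Type} {d : ι → ℕ} (S : Set (Pt k d)) : Prop :=
  ∀ Z : ℕ → Set (Pt k d), (∀ j, CS (Z j)) → Antitone Z → ∃ N, ∀ j, N ≤ j → Z N ∩ S ⊆ Z j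

theorem Noeth.mono {ι : Type} {d : ι → ℕ} {S S' : Set (Pt k d)} (h : Noeth S) (hs : S' ⊆ S) :
    Noeth S' := by
  intro Z hZ hA
  obtain ⟨N, hN⟩ := h Z hZ hA
  exact ⟨N, fun j hj x hx => hN j hj ⟨hx.1, hs hx.2⟩⟩

theorem Noeth.union {ι : Type} {d : ι → ℕ} {S S' : Set (Pt k d)} (h : Noeth S) (h' : Noeth S') :
    Noeth (S ∪ S') := by
  intro Z hZ hA
  obtain ⟨N, hN⟩ := h Z hZ hA
  obtain ⟨N', hN'⟩ := h' Z hZ hA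
  refine ⟨max N N', fun j hj x hx => ?_⟩
  rcases hx.2 with h1 | h1
  · exact hN j (le_trans (le_max_left _ _) hj) ⟨hA (le_max_left _ _) hx.1, h1⟩
  · exact hN' j (le_trans (le_max_right _ _) hj) ⟨hA (le_max_right _ _) hx.1, h1⟩

theorem CS.inter {ι : Type} {d : ι → ℕ} {S S' : Set (Pt k d)} (h : CS S) (h' : CS S') :
    CS (S ∩ S') := by
  refine ⟨fun x hx => ⟨h.closed x fun f hf => hx f fun z hz => hf z hz.1,
    h'.closed x fun f hf => hx f fun z hz => hf z hz.2⟩, fun x hx φ =>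
    ⟨h.stable x hx.1 φ, h'.stable x hx.2 φ⟩⟩

/-- zero set of the orbit of a set of polynomials -/
def VV {ι : Type} (d : ι → ℕ) (C : Set (MvPolynomial (ι × Multiset ℕ) k)) : Set (Pt k d) :=
  {x | ∀ φ, ∀ P ∈ C, ev (act x φ) P = 0}

theorem cs_VV {ι : Type} (d : ι → ℕ) (C : Set (MvPolynomial (ι × Multiset ℕ) k)) :
    CS (VV d C) := by
  refine ⟨fun x hx φ P hP => ?_, fun x hx φ ψ P hP => ?_⟩
  · obtain ⟨f, hf⟩ := ev_act d φ P
    rw [← hf]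
    exact hx f fun z hz => by rw [hf]; exact hz φ P hP
  · rw [act_act]; exact hx _ P hP

theorem cs_closure {ι : Type} {d : ι → ℕ} (A : Set (Pt k d))
    (hA : ∀ x ∈ A, ∀ φ, act x φ ∈ A) :
    CS {y : Pt k d | ∀ p, (∀ x ∈ A, ev x p = 0) → ev y p = 0} := by
  refine ⟨fun x hx p hp => hx p fun z hz => hz p hp, fun x hx φ p hp => ?_⟩
  obtain ⟨f, hf⟩ := ev_act d φ p
  rw [← hf]
  exact hx f fun z hz => by rw [hf]; exact hp _ (hA z hz φ)

theorem noeth_of_proper {ι : Type} {d : ι → ℕ} (S : Set (Pt k d)) (hS : CS S)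
    (h : ∀ X ⊆ S, CS X → X ≠ S → Noeth X) : Noeth S := by
  intro Z hZ hA
  by_cases hc : ∀ j, S ⊆ Z j
  · exact ⟨0, fun j _ x hx => hc j hx.2⟩
  · push Not at hc
    obtain ⟨N, hN⟩ := hc
    obtain ⟨M, hM⟩ := h (Z N ∩ S) Set.inter_subset_right ((hZ N).inter hS) (fun hh => hN (by
      intro x hx; rw [← hh] at hx; exact hx.1)) Z hZ hA
    refine ⟨max N M, fun j hj x hx => ?_⟩
    exact hM j (le_trans (le_max_right _ _) hj) ⟨hA (le_max_right _ _) hx.1,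
      hA (le_max_left _ _) hx.1, hx.2⟩

theorem wf_of_noeth {ι : Type} {d : ι → ℕ} (h : Noeth (Set.univ : Set (Pt k d))) :
    WellFounded (fun A B : {Z : Set (Pt k d) // CS Z} => A < B) := by
  have : WellFoundedGT ({Z : Set (Pt k d) // CS Z}ᵒᵈ) := by
    rw [wellFoundedGT_iff_monotone_chain_condition]
    intro a
    obtain ⟨N, hN⟩ := h (fun j => (OrderDual.ofDual (a j)).1) (fun j => (OrderDual.ofDual (a j)).2)
      (fun i j hij => a.monotone hij)
    refine ⟨N, fun m hm => ?_⟩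
    apply le_antisymm
    · exact a.monotone hm
    · intro x hx
      exact hN m hm ⟨hx, trivial⟩
  exact this.wf

theorem noeth_base {ι : Type} [Fintype ι] (d : ι → ℕ) (hd : ∀ i, d i = 0) :
    Noeth (Set.univ : Set (Pt k d)) := by
  intro Z hZ hA
  let ez : Pt k d → MvPolynomial ι k →ₐ[k] k := fun z => aeval (fun i => (z i).toFun 0)
  let red : MvPolynomial (ι × Multiset ℕ) k →ₐ[k] MvPolynomial ι k :=
    aeval (fun p => if p.2 = 0 then X p.1 else 0)
  have hred : ∀ z f, ez z (red f) = ev z f := by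
    intro z f
    have : (ez z).comp red = ev z := by
      apply MvPolynomial.algHom_ext
      rintro ⟨i, m⟩
      simp only [AlgHom.comp_apply, aeval_X, ev_X, red]
      split_ifs with h
      · subst h; simp [ez]
      · rw [map_zero, (z i).deg]
        simpa [hd i] using h
    rw [← this]; rfl
  let I : ℕ →o Ideal (MvPolynomial ι k) :=
    ⟨fun j =>
      { carrier := {f | ∀ z ∈ Z j, ez z f = 0}
        add_mem' := fun {a b} ha hb z hz => by rw [map_add, ha z hz, hb z hz, add_zero]
        zero_mem' := fun z _ => map_zero _
        smul_mem' := fun c f hf z hz => by rw [smul_eq_mul, map_mul, hf z hz, mul_zero] }, by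
      intro i j hij f hf z hz
      exact hf z (hA hij hz)⟩
  obtain ⟨N, hN⟩ := monotone_stabilizes_iff_noetherian.mpr
    (inferInstance : IsNoetherianRing (MvPolynomial ι k)) I
  refine ⟨N, fun j hj x hx => (hZ j).closed x fun f hf => ?_⟩
  have : red f ∈ I j := fun z hz => by rw [hred]; exact hf z hz
  rw [← hN j hj] at this
  have := this x hx.1
  rwa [hred] at this

end CubN

namespace CubN

open MvPolynomial

universe u
variable {k : Type u} [Field k]

/-- shift of basis vectors -/
noncomputable def shv (k : Type u) [Field k] (n : ℕ) : (ℕ →₀ k) →ₗ[k] (ℕ →₀ k) :=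
  Finsupp.linearCombination k (fun i => e k (i + n))

theorem shv_e (n i : ℕ) : shv k n (e k i) = e k (i + n) := by simp [shv, e]

/-- linear map with prescribed values on basis vectors -/
noncomputable def lm (v : ℕ → (ℕ →₀ k)) : (ℕ →₀ k) →ₗ[k] (ℕ →₀ k) :=
  Finsupp.linearCombination k v

theorem lm_e (v : ℕ → (ℕ →₀ k)) (i : ℕ) : lm v (e k i) = v i := by simp [lm, e]

abbrev JJ {ι : Type} (d : ι → ℕ) (r : ι) (n : ℕ) : Type :=
  {i : ι // i ≠ r} ⊕ {p : ι × Set.Iic (3 • Multiset.range n) //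
    0 < Multiset.card p.2.1 ∧ Multiset.card p.2.1 ≤ d p.1}

def dJ {ι : Type} (d : ι → ℕ) (r : ι) (n : ℕ) : JJ d r n → ℕ :=
  Sum.elim (fun i => d i.1) (fun p => d p.1.1 - Multiset.card p.1.2.1)

noncomputable def sh {ι : Type} {d : ι → ℕ} (r : ι) (n : ℕ) (z : Pt k d) : Pt k (dJ d r n)
  | Sum.inl i => (z i.1).act (shv k n)
  | Sum.inr p =>
    { toFun := fun s => (z p.1.1).toFun (p.1.2.1.map (e k) + s.map (shv k n))
      deg := fun s hs => (z p.1.1).deg _ (by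
        have h1 := p.2.2
        simp only [dJ, Sum.elim_inr] at hs
        simp only [Multiset.card_add, Multiset.card_map]
        omega)
      lin := fun a x y s => by
        simp only [Multiset.map_cons, Multiset.add_cons, map_add, map_smul, (z p.1.1).lin] }

def Good {ι : Type} {d : ι → ℕ} (r : ι) (n : ℕ) (g : Pt k d → k) : Prop :=
  ∃ p : MvPolynomial (JJ d r n × Multiset ℕ) k, ∀ z, ev (sh r n z) p = g z

theorem good_ne {ι : Type} {d : ι → ℕ} {r : ι} (n : ℕ) (hd : ∀ i, d i ≤ 3) (i : ι)
    (u : Multiset ℕ) (hu : ∀ a ∈ u, a < n) (s : Multiset (ℕ →₀ k)) (h : i ≠ r ∨ u ≠ 0) :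
    Good (d := d) r n (fun z => (z i).toFun (u.map (e k) + s.map (shv k n))) := by
  by_cases h0 : u = 0
  · have hi : i ≠ r := by tauto
    obtain ⟨p, hp⟩ := coord_vec' (k := k) (dJ d r n) (Sum.inl ⟨i, hi⟩) s
    refine ⟨p, fun z => ?_⟩
    rw [hp, h0]
    simp [sh, Form.act]
  · by_cases hc : Multiset.card u ≤ d i
    · have hu3 : u ≤ 3 • Multiset.range n := by
        rw [Multiset.le_iff_count]
        intro a
        by_cases ha : a ∈ u
        · have : Multiset.count a (Multiset.range n) = 1 :=
            Multiset.count_eq_one_of_mem (Multiset.nodup_range n) (by simpa using hu a ha)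
          rw [Multiset.count_nsmul, this]
          have := Multiset.count_le_card a u
          have := hd i
          omega
        · rw [Multiset.count_eq_zero_of_notMem ha]; exact Nat.zero_le _
      obtain ⟨p, hp⟩ := coord_vec' (k := k) (dJ d r n)
        (Sum.inr ⟨(i, ⟨u, hu3⟩), Multiset.card_pos.mpr h0, hc⟩) s
      refine ⟨p, fun z => ?_⟩
      rw [hp]
      rfl
    · refine ⟨0, fun z => ?_⟩
      rw [map_zero]
      symm
      apply (z i).deg
      simp only [Multiset.card_add, Multiset.card_map]
      omega

theorem map_e_split (n : ℕ) (m : Multiset ℕ) :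
    m.map (e k) = (m.filter (· < n)).map (e k) +
      (((m.filter (¬ · < n)).map (fun a => e k (a - n))).map (shv k n)) := by
  conv_lhs => rw [← Multiset.filter_add_not (· < n) m, Multiset.map_add]
  congr 1
  rw [Multiset.map_map]
  apply Multiset.map_congr rfl
  intro a ha
  have := (Multiset.mem_filter.mp ha).2
  simp only [Function.comp, shv_e]
  rw [Nat.sub_add_cancel (by omega)]

theorem good_coord {ι : Type} {d : ι → ℕ} {r : ι} (n : ℕ) (hd : ∀ i, d i ≤ 3) (i : ι)
    (m : Multiset ℕ) (s : Multiset (ℕ →₀ k)) (h : i ≠ r ∨ ∃ a ∈ m, a < n) :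
    Good (d := d) r n (fun z => (z i).toFun (m.map (e k) + s.map (shv k n))) := by
  have := good_ne (k := k) (d := d) (r := r) n hd i (m.filter (· < n))
    (fun a ha => (Multiset.mem_filter.mp ha).2)
    ((m.filter (¬ · < n)).map (fun a => e k (a - n)) + s) (by
      rcases h with h | ⟨a, ha, han⟩
      · exact Or.inl h
      · right
        intro h0
        have : a ∈ m.filter (· < n) := Multiset.mem_filter.mpr ⟨ha, han⟩
        rw [h0] at this
        simp at this)
  convert this using 3 with z
  conv_lhs => rw [map_e_split n m]
  rw [Multiset.map_add, add_assoc]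

/-- expansion in `t`, good case -/
theorem expand_good {ι : Type} {d : ι → ℕ} {r : ι} (n : ℕ) (hd : ∀ i, d i ≤ 3) (i : ι)
    (ℓ : ℕ → k) (w : ℕ →₀ k) (m : Multiset ℕ) :
    ∀ (u : Multiset ℕ) (j : ℕ), (i ≠ r ∨ ∃ a ∈ u, a < n) →
    ∃ b : Polynomial (MvPolynomial (JJ d r n × Multiset ℕ) k), ∀ (z : Pt k d) (t : k),
      (b.map (ev (sh r n z)).toRingHom).eval t =
        (z i).toFun (m.map (fun a => e k a + (t * ℓ a) • shv k n w) +
          (u.map (e k) + Multiset.replicate j (shv k n w))) := by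
  induction m using Multiset.induction_on with
  | empty =>
    intro u j h
    obtain ⟨p, hp⟩ := good_coord (k := k) (d := d) (r := r) n hd i u (Multiset.replicate j w) h
    refine ⟨Polynomial.C p, fun z t => ?_⟩
    have := hp z
    simpa using this
  | cons a m ih =>
    intro u j h
    obtain ⟨b1, h1⟩ := ih (a ::ₘ u) j (by
      rcases h with h | ⟨c, hc, hn⟩
      · exact Or.inl h
      · exact Or.inr ⟨c, Multiset.mem_cons_of_mem hc, hn⟩)
    obtain ⟨b2, h2⟩ := ih u (j + 1) h
    refine ⟨b1 + Polynomial.X * Polynomial.C (C (ℓ a)) * b2, fun z t => ?_⟩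
    rw [Polynomial.map_add, Polynomial.map_mul, Polynomial.map_mul, Polynomial.eval_add,
      Polynomial.eval_mul, Polynomial.eval_mul, h1, h2]
    simp [Form.lin, Multiset.replicate_succ, ev]

/-- expansion in `t`, bad case -/
theorem expand_bad {ι : Type} {d : ι → ℕ} {r : ι} (n : ℕ) (hd : ∀ i, d i ≤ 3)
    (ℓ : ℕ → k) (w : ℕ →₀ k) (m : Multiset ℕ) (hm : ∀ a ∈ m, a < n) :
    ∀ (j : ℕ),
    ∃ b : Polynomial (MvPolynomial (JJ d r n × Multiset ℕ) k), ∀ (z : Pt k d) (t : k),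
      (b.map (ev (sh r n z)).toRingHom).eval t + t ^ (Multiset.card m) * (m.map ℓ).prod *
          (z r).toFun (Multiset.replicate (Multiset.card m + j) (shv k n w)) =
        (z r).toFun (m.map (fun a => e k a + (t * ℓ a) • shv k n w) +
          (Multiset.replicate j (shv k n w))) := by
  induction m using Multiset.induction_on with
  | empty =>
    intro j
    exact ⟨0, fun z t => by simp⟩
  | cons a m ih =>
    intro j
    obtain ⟨b1, h1⟩ := expand_good (k := k) (d := d) (r := r) n hd r ℓ w m {a} j
      (Or.inr ⟨a, by simp, hm a (by simp)⟩)
    obtain ⟨b2, h2⟩ := ih (fun c hc => hm c (Multiset.mem_cons_of_mem hc)) (j + 1)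
    refine ⟨b1 + Polynomial.X * Polynomial.C (C (ℓ a)) * b2, fun z t => ?_⟩
    rw [Polynomial.map_add, Polynomial.map_mul, Polynomial.map_mul, Polynomial.eval_add,
      Polynomial.eval_mul, Polynomial.eval_mul, h1]
    have h2' := h2 z t
    rw [Multiset.map_cons (fun a => e k a + (t * ℓ a) • shv k n w), Multiset.cons_add, Form.lin]
    rw [Multiset.replicate_succ, Multiset.add_cons] at h2'
    rw [← h2']
    have e1 : Multiset.card (a ::ₘ m) + j = Multiset.card m + (j + 1) := by
      rw [Multiset.card_cons]; omega
    rw [e1]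
    simp [ev]
    ring

end CubN

namespace CubN

open MvPolynomial

universe u
variable {k : Type u} [Field k]

theorem taylor {σ A S : Type*} [CommRing A] [CommRing S] (g : A →+* S) (a : σ → S) (c : σ → A)
    (ε : S) (F : MvPolynomial σ A) :
    ∃ E, eval₂Hom g (fun m => a m + ε * g (c m)) F = eval₂Hom g a F +
      ε * eval₂Hom g a (mkDerivation A (fun m => (C (c m) : MvPolynomial σ A)) F) + ε ^ 2 * E := by
  induction F using MvPolynomial.induction_on with
  | C x => exact ⟨0, by simp [derivation_C]⟩
  | add p q hp hq =>
    obtain ⟨E, hE⟩ := hp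
    obtain ⟨E', hE'⟩ := hq
    refine ⟨E + E', ?_⟩
    rw [map_add, hE, hE', map_add, map_add, map_add]
    ring
  | mul_X p i hp =>
    obtain ⟨E, hE⟩ := hp
    refine ⟨eval₂Hom g a (mkDerivation A (fun m => (C (c m) : MvPolynomial σ A)) p) * g (c i)
      + E * (a i + ε * g (c i)), ?_⟩
    rw [map_mul, hE, Derivation.leibniz, mkDerivation_X]
    simp only [map_mul, map_add, smul_eq_mul, eval₂Hom_X', eval₂Hom_C]
    ring

abbrev AA (k : Type u) [Field k] {ι : Type} (r : ι) : Type u :=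
  MvPolynomial ({i : ι // i ≠ r} × Multiset ℕ) k

abbrev MM (D : ℕ) : Type := {m : Multiset ℕ // Multiset.card m = D}

abbrev dP {ι : Type} (d : ι → ℕ) (r : ι) : {i : ι // i ≠ r} → ℕ := fun i => d i.1

def pr {ι : Type} {d : ι → ℕ} (r : ι) (z : Pt k d) : Pt k (dP d r) := fun i => z i.1

theorem pr_act {ι : Type} {d : ι → ℕ} (r : ι) (z : Pt k d) (φ) :
    pr r (act z φ) = act (pr r z) φ := rfl

noncomputable def Fev {ι : Type} {d : ι → ℕ} (r : ι) (q : ℕ) (z : Pt k d) :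
    MvPolynomial (MM (d r)) (AA k r) →+* k :=
  eval₂Hom (ev (pr r z)).toRingHom (fun m => (z r).toFun (m.1.map (e k)) ^ q)

theorem exists_toP {ι : Type} {d : ι → ℕ} (r : ι) (q : ℕ) (F : MvPolynomial (MM (d r)) (AA k r)) :
    ∃ f : MvPolynomial (ι × Multiset ℕ) k, ∀ z : Pt k d, ev z f = Fev r q z F := by
  refine ⟨eval₂Hom (rename (fun p : {i : ι // i ≠ r} × Multiset ℕ => (p.1.1, p.2))).toRingHom
    (fun m => X (r, m.1) ^ q) F, fun z => ?_⟩
  have : (ev z).toRingHom.comp (eval₂Hom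
      (rename (fun p : {i : ι // i ≠ r} × Multiset ℕ => (p.1.1, p.2))).toRingHom
      (fun m : MM (d r) => (X (r, m.1) : MvPolynomial (ι × Multiset ℕ) k) ^ q)) = Fev r q z := by
    apply MvPolynomial.ringHom_ext
    · intro a
      have h2 : (ev z).comp (rename (fun p : {i : ι // i ≠ r} × Multiset ℕ => (p.1.1, p.2)))
          = ev (pr r z) := by
        apply MvPolynomial.algHom_ext
        intro p
        simp [ev_X, pr]
      have h3 := DFunLike.congr_fun h2 a
      simpa [Fev] using h3
    · intro m
      simp [Fev, ev_X]
  rw [← this]; rfl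

noncomputable def DD {ι : Type} (d : ι → ℕ) (r : ι) (q : ℕ) (ℓ : ℕ → k) :
    Derivation (AA k r) (MvPolynomial (MM (d r)) (AA k r)) (MvPolynomial (MM (d r)) (AA k r)) :=
  mkDerivation (AA k r) (fun m => (C (C ((m.1.map ℓ).prod ^ q))))

theorem key1 [Infinite k] {ι : Type} {d : ι → ℕ} (r : ι) (n : ℕ) (hd : ∀ i, d i ≤ 3)
    (hr : 0 < d r)
    (p ex : ℕ) [ExpChar k p] (F : MvPolynomial (MM (d r)) (AA k r))
    (hF : ∀ m ∈ F.vars, ∀ a ∈ m.1, a < n) (ℓ : ℕ → k) (w : ℕ →₀ k) (X : Set (Pt k d))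
    (hX : CS X) (hv : ∀ z ∈ X, Fev r (p ^ ex) z F = 0) :
    ∃ g : MvPolynomial (JJ d r n × Multiset ℕ) k, ∀ z ∈ X,
      ev (sh r n z) g = Fev r (p ^ ex) z (DD d r (p ^ ex) ℓ F) *
        (z r).toFun (Multiset.replicate (d r) (shv k n w)) ^ (p ^ ex) := by
  classical
  have hp0 : 0 < p := expChar_pos k p
  set q := p ^ ex with hq
  have hq0 : 0 < q := pow_pos hp0 _
  choose a ha using fun x : {i : ι // i ≠ r} × Multiset ℕ =>
    expand_good (k := k) (d := d) (r := r) n hd x.1.1 ℓ w x.2 0 0 (Or.inl x.1.2)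
  have hb' : ∀ m : MM (d r), ∃ b : Polynomial (MvPolynomial (JJ d r n × Multiset ℕ) k),
      (∀ a ∈ m.1, a < n) → ∀ (z : Pt k d) (t : k),
      (b.map (ev (sh r n z)).toRingHom).eval t + t ^ (d r) * (m.1.map ℓ).prod *
          (z r).toFun (Multiset.replicate (d r) (shv k n w)) =
        (z r).toFun (m.1.map (fun a => e k a + (t * ℓ a) • shv k n w)) := by
    intro m
    by_cases h : ∀ a ∈ m.1, a < n
    · obtain ⟨b, hb⟩ := expand_bad (k := k) (d := d) (r := r) n hd ℓ w m.1 h 0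
      refine ⟨b, fun _ z t => ?_⟩
      have := hb z t
      simpa [m.2] using this
    · exact ⟨0, fun h' => absurd h' h⟩
  choose b hb using hb'
  let gA : AA k r →+* Polynomial (MvPolynomial (JJ d r n × Multiset ℕ) k) := (aeval a).toRingHom
  let FA := eval₂Hom gA (fun m => b m ^ q) F
  refine ⟨-(FA.coeff (d r * q)), fun z hz => ?_⟩
  let θ := Polynomial.mapRingHom (ev (sh r n z)).toRingHom
  let gz := θ.comp gA
  let α : MM (d r) → Polynomial k := fun m =>
    if ∀ a ∈ m.1, a < n then θ (b m) ^ q else Polynomial.C ((z r).toFun (m.1.map (e k)) ^ q)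
  set R := (z r).toFun (Multiset.replicate (d r) (shv k n w)) with hR
  let ε : Polynomial k := Polynomial.C (R ^ q) * Polynomial.X ^ (d r * q)
  let c : MM (d r) → AA k r := fun m => C ((m.1.map ℓ).prod ^ q)
  let φ : k → (ℕ →₀ k) →ₗ[k] (ℕ →₀ k) := fun t => lm (fun a => e k a + (t * ℓ a) • shv k n w)
  have hφ : ∀ t (m : Multiset ℕ), (m.map (e k)).map (φ t) =
      m.map (fun a => e k a + (t * ℓ a) • shv k n w) := by
    intro t m
    rw [Multiset.map_map]
    apply Multiset.map_congr rfl
    intro i _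
    exact lm_e _ _
  have hgz : ∀ t, (Polynomial.evalRingHom t).comp gz = (ev (pr r (act z (φ t)))).toRingHom := by
    intro t
    apply MvPolynomial.ringHom_ext
    · intro x
      simp [gz, gA, θ, ev]
    · intro x
      have := ha x z t
      simp only [AlgHom.toRingHom_eq_coe, RingHom.coe_comp, RingHom.coe_coe, Function.comp_apply,
        gz, gA, aeval_X, θ, ev_X, pr, act_apply, hφ, Polynomial.coe_evalRingHom,
        Polynomial.coe_mapRingHom]
      simpa using this
  obtain ⟨E, hE⟩ := taylor gz α c ε F
  have hzero : eval₂Hom gz (fun m => α m + ε * gz (c m)) F = 0 := by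
    apply Polynomial.funext
    intro t
    have h1 : (Polynomial.evalRingHom t).comp (eval₂Hom gz (fun m => α m + ε * gz (c m))) =
        eval₂Hom ((Polynomial.evalRingHom t).comp gz)
          (fun m => Polynomial.evalRingHom t (α m + ε * gz (c m))) := by
      apply MvPolynomial.ringHom_ext <;> intro x <;> simp
    have h2 := RingHom.congr_fun h1 F
    rw [RingHom.comp_apply, Polynomial.coe_evalRingHom] at h2
    rw [h2, Polynomial.eval_zero, hgz]
    rw [← hv _ (hX.stable z hz (φ t))]
    apply MvPolynomial.eval₂Hom_congr' rfl _ rfl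
    intro m hm _
    have hm' := hF m hm
    have hbb := hb m hm' z t
    have hc : gz (c m) = Polynomial.C ((m.1.map ℓ).prod ^ q) := by
      simp [gz, gA, c, θ, ev]
    rw [hc]
    simp only [α, if_pos hm', act_apply, hφ, ← hbb, θ, ε, Polynomial.coe_mapRingHom,
      Polynomial.coe_evalRingHom, Polynomial.eval_add, Polynomial.eval_mul, Polynomial.eval_pow,
      Polynomial.eval_C, Polynomial.eval_X]
    rw [hq, add_pow_expChar_pow, ← hq]
    ring
  rw [hzero] at hE
  have hcoef := congrArg (fun P => Polynomial.coeff P (d r * q)) hE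
  have hFA : eval₂Hom gz α F = θ FA := by
    have h1 : θ.comp (eval₂Hom gA (fun m => b m ^ q)) = eval₂Hom gz (fun m => θ (b m) ^ q) := by
      apply MvPolynomial.ringHom_ext <;> intro x <;> simp [gz]
    have h2 := RingHom.congr_fun h1 F
    rw [RingHom.comp_apply] at h2
    rw [h2]
    apply MvPolynomial.eval₂Hom_congr' rfl _ rfl
    intro m hm _
    simp only [α, if_pos (hF m hm)]
  have hG : (eval₂Hom gz α (DD d r q ℓ F)).coeff 0 = Fev r q z (DD d r q ℓ F) := by
    rw [Polynomial.coeff_zero_eq_eval_zero]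
    have h1 : (Polynomial.evalRingHom 0).comp (eval₂Hom gz α) =
        eval₂Hom ((Polynomial.evalRingHom 0).comp gz)
          (fun m => Polynomial.evalRingHom 0 (α m)) := by
      apply MvPolynomial.ringHom_ext <;> intro x <;> simp
    have h2 := RingHom.congr_fun h1 (DD d r q ℓ F)
    rw [RingHom.comp_apply, Polynomial.coe_evalRingHom] at h2
    rw [h2, hgz]
    have h3 : act z (φ 0) = z := by
      have : φ 0 = LinearMap.id := by
        apply Finsupp.lhom_ext'
        intro i
        ext1
        have := lm_e (fun a => e k a + ((0 : k) * ℓ a) • shv k n w) i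
        simpa [φ] using this
      rw [this, act_id]
    rw [h3, Fev]
    congr 2
    funext m
    simp only [α]
    split_ifs with hm
    · have := hb m hm z 0
      rw [zero_pow hr.ne'] at this
      simp only [zero_mul, add_zero, zero_smul] at this
      simp only [θ, Polynomial.coe_mapRingHom, Polynomial.coe_evalRingHom, Polynomial.eval_pow]
      rw [this]
    · simp
  have hdq : 0 < d r * q := Nat.mul_pos hr hq0
  have e1 : (ε * eval₂Hom gz α (DD d r q ℓ F)).coeff (d r * q) =
      R ^ q * Fev r q z (DD d r q ℓ F) := by
    simp only [ε]
    rw [mul_assoc, Polynomial.coeff_C_mul]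
    have := Polynomial.coeff_X_pow_mul (eval₂Hom gz α (DD d r q ℓ F)) (d r * q) 0
    rw [zero_add] at this
    rw [this, hG]
  have e2 : (ε ^ 2 * E).coeff (d r * q) = 0 := by
    have : ε ^ 2 * E = Polynomial.X ^ (d r * q + d r * q) * (Polynomial.C ((R ^ q) ^ 2) * E) := by
      simp only [ε]
      rw [pow_add]
      simp only [map_pow]
      ring
    rw [this, Polynomial.coeff_X_pow_mul', if_neg (by omega)]
  have e3 : (θ FA).coeff (d r * q) = ev (sh r n z) (FA.coeff (d r * q)) := by
    simp [θ]
  simp only [Polynomial.coeff_zero, Polynomial.coeff_add] at hcoef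
  rw [hFA, e3, e2] at hcoef
  have e1' := e1
  unfold DD at e1'
  rw [e1'] at hcoef
  rw [map_neg]
  unfold DD
  linear_combination hcoef

end CubN

namespace CubN

open MvPolynomial

universe u
variable {k : Type u} [Field k]

theorem polar {W : Type*} [AddCommGroup W] [Module k W] (h2 : (2 : k) ≠ 0) (h3 : (3 : k) ≠ 0)
    (D : ℕ) (hD : D ≤ 3) (S : Submodule k W) (τ : Multiset (ℕ →₀ k) → W)
    (hlin : ∀ x y s, τ ((x + y) ::ₘ s) = τ (x ::ₘ s) + τ (y ::ₘ s))
    (hdiag : ∀ w, τ (Multiset.replicate D w) ∈ S) (s : Multiset (ℕ →₀ k))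
    (hs : Multiset.card s = D) : τ s ∈ S := by
  interval_cases D
  · rw [Multiset.card_eq_zero] at hs
    subst hs
    simpa using hdiag 0
  · rw [Multiset.card_eq_one] at hs
    obtain ⟨a, rfl⟩ := hs
    simpa using hdiag a
  · rw [Multiset.card_eq_two] at hs
    obtain ⟨a, b, rfl⟩ := hs
    have key : (2 : k) • τ {a, b} = τ {a + b, a + b} - τ {a, a} - τ {b, b} := by
      have e1 : τ {a + b, a + b} = τ {a, a} + τ {a, b} + τ {a, b} + τ {b, b} := by
        have p1 : ∀ x, ({x, a + b} : Multiset (ℕ →₀ k)) = (a + b) ::ₘ {x} :=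
          fun x => Multiset.pair_comm _ _
        have p2 : ∀ x y, τ ((x : ℕ →₀ k) ::ₘ {y}) = τ {x, y} := fun x y => rfl
        have := hlin a b {a + b}
        rw [p2, p2, p2, p1 a, p1 b, hlin, hlin, p2, p2, p2, p2, Multiset.pair_comm b a] at this
        rw [this]; abel
      rw [e1, two_smul]; abel
    have hd' : ∀ w, τ {w, w} ∈ S := fun w => by simpa [Multiset.replicate_succ] using hdiag w
    have : (2 : k) • τ {a, b} ∈ S := by
      rw [key]
      exact S.sub_mem (S.sub_mem (hd' _) (hd' _)) (hd' _)
    exact (S.smul_mem_iff h2).mp this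
  · rw [Multiset.card_eq_three] at hs
    obtain ⟨a, b, c, rfl⟩ := hs
    have hd' : ∀ w, τ (w ::ₘ w ::ₘ w ::ₘ 0) ∈ S := fun w => by
      simpa [Multiset.replicate_succ] using hdiag w
    have l1 : ∀ x y u v, τ ((x + y) ::ₘ u ::ₘ v ::ₘ 0) = τ (x ::ₘ u ::ₘ v ::ₘ 0) +
      τ (y ::ₘ u ::ₘ v ::ₘ 0) := fun x y u v => hlin _ _ _
    have l2 : ∀ x y u v, τ (u ::ₘ (x + y) ::ₘ v ::ₘ 0) = τ (u ::ₘ x ::ₘ v ::ₘ 0) +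
      τ (u ::ₘ y ::ₘ v ::ₘ 0) := fun x y u v => by
        rw [Multiset.cons_swap, hlin, Multiset.cons_swap x, Multiset.cons_swap y]
    have l3 : ∀ x y u v, τ (u ::ₘ v ::ₘ (x + y) ::ₘ 0) = τ (u ::ₘ v ::ₘ x ::ₘ 0) +
      τ (u ::ₘ v ::ₘ y ::ₘ 0) := fun x y u v => by
        rw [Multiset.cons_swap v, l2, Multiset.cons_swap v, Multiset.cons_swap v]
    have s1 : ∀ x y z, τ (x ::ₘ y ::ₘ z ::ₘ 0) = τ (y ::ₘ x ::ₘ z ::ₘ 0) := fun x y z => by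
      rw [Multiset.cons_swap]
    have s2 : ∀ x y z, τ (x ::ₘ y ::ₘ z ::ₘ 0) = τ (x ::ₘ z ::ₘ y ::ₘ 0) := fun x y z => by
      rw [Multiset.cons_swap y]
    have key : (6 : k) • τ (a ::ₘ b ::ₘ c ::ₘ 0) =
        τ ((a + b + c) ::ₘ (a + b + c) ::ₘ (a + b + c) ::ₘ 0)
        - τ ((a + b) ::ₘ (a + b) ::ₘ (a + b) ::ₘ 0) - τ ((a + c) ::ₘ (a + c) ::ₘ (a + c) ::ₘ 0)
        - τ ((b + c) ::ₘ (b + c) ::ₘ (b + c) ::ₘ 0)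
        + τ (a ::ₘ a ::ₘ a ::ₘ 0) + τ (b ::ₘ b ::ₘ b ::ₘ 0) + τ (c ::ₘ c ::ₘ c ::ₘ 0) := by
      simp only [l1, l2, l3]
      rw [s2 a c b, s1 b a c, s1 c a b, s2 a c b, s2 b c a, s1 b a c, s2 c b a, s1 c a b, s2 a c b]
      module
    have h6 : (6 : k) ≠ 0 := by
      have : (6 : k) = 2 * 3 := by norm_num
      rw [this]; exact mul_ne_zero h2 h3
    have : (6 : k) • τ (a ::ₘ b ::ₘ c ::ₘ 0) ∈ S := by
      rw [key]
      refine S.add_mem (S.add_mem (S.add_mem (S.sub_mem (S.sub_mem (S.sub_mem ?_ ?_) ?_) ?_)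
        ?_) ?_) ?_ <;> exact hd' _
    exact (S.smul_mem_iff h6).mp this

/-- functions which become good after raising to the power `q` and multiplying by `h` -/
def Gd {ι : Type} {d : ι → ℕ} (r : ι) (n q : ℕ) (X : Set (Pt k d)) (h : Pt k d → k)
    (g : Pt k d → k) : Prop :=
  ∃ (N : ℕ) (p : MvPolynomial (JJ d r n × Multiset ℕ) k), ∀ z ∈ X,
    ev (sh r n z) p = h z ^ N * g z ^ q

theorem Gd.add {ι : Type} {d : ι → ℕ} {r : ι} {n p ex : ℕ} [ExpChar k p] {X : Set (Pt k d)}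
    {h g g' : Pt k d → k} (hh : Good r n h) (H : Gd r n (p ^ ex) X h g)
    (H' : Gd r n (p ^ ex) X h g') : Gd r n (p ^ ex) X h (fun z => g z + g' z) := by
  obtain ⟨N, f, hf⟩ := H
  obtain ⟨N', f', hf'⟩ := H'
  obtain ⟨η, hη⟩ := hh
  refine ⟨N + N', η ^ N' * f + η ^ N * f', fun z hz => ?_⟩
  rw [map_add, map_mul, map_mul, map_pow, map_pow, hη, hf z hz, hf' z hz, add_pow_expChar_pow]
  ring

theorem Gd.mul {ι : Type} {d : ι → ℕ} {r : ι} {n q : ℕ} {X : Set (Pt k d)}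
    {h g g' : Pt k d → k} (H : Gd r n q X h g)
    (H' : Gd r n q X h g') : Gd r n q X h (fun z => g z * g' z) := by
  obtain ⟨N, f, hf⟩ := H
  obtain ⟨N', f', hf'⟩ := H'
  refine ⟨N + N', f * f', fun z hz => ?_⟩
  rw [map_mul, hf z hz, hf' z hz]
  ring

theorem Gd.const {ι : Type} {d : ι → ℕ} (r : ι) (n q : ℕ) (X : Set (Pt k d))
    (h : Pt k d → k) (a : k) : Gd r n q X h (fun _ => a) :=
  ⟨0, C (a ^ q), fun z _ => by simp [ev]⟩

theorem Gd.of_good {ι : Type} {d : ι → ℕ} {r : ι} {n q : ℕ} {X : Set (Pt k d)}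
    {h g : Pt k d → k} (hg : Good r n g) : Gd r n q X h g := by
  obtain ⟨f, hf⟩ := hg
  exact ⟨0, f ^ q, fun z _ => by simp [hf]⟩

theorem sh_act {ι : Type} {d : ι → ℕ} (r : ι) (n : ℕ) (z : Pt k d)
    (φ : (ℕ →₀ k) →ₗ[k] (ℕ →₀ k)) :
    sh r n (act z (lm (fun i => if i < n then e k i else shv k n (φ (e k (i - n)))))) =
      act (sh r n z) φ := by
  set ψ := lm (fun i => if i < n then e k i else shv k n (φ (e k (i - n)))) with hψ
  have h1 : ∀ v, ψ (shv k n v) = shv k n (φ v) := by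
    intro v
    have : ψ ∘ₗ shv k n = shv k n ∘ₗ φ := by
      apply Finsupp.lhom_ext'
      intro i
      ext1
      have : ψ (shv k n (e k i)) = shv k n (φ (e k i)) := by
        rw [shv_e, hψ, lm_e, if_neg (by omega), Nat.add_sub_cancel]
      simpa using this
    exact LinearMap.congr_fun this v
  funext j
  rcases j with i | p
  · simp only [sh, act, Form.act, Multiset.map_map, Function.comp_def, h1]
    rfl
  · simp only [sh, act, Form.act, Multiset.map_map, Multiset.map_add, Function.comp_def, h1]
    congr 1
    funext s
    congr 2
    apply Multiset.map_congr rfl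
    intro a ha
    have : a < n := by
      have := Multiset.mem_of_le p.1.2.2 ha
      have := Multiset.mem_of_mem_nsmul this
      simpa using this
    rw [hψ, lm_e, if_pos this]

theorem open_part [Infinite k] (h2 : (2 : k) ≠ 0) (h3 : (3 : k) ≠ 0) {ι : Type} {d : ι → ℕ}
    (r : ι) (hd : ∀ i, d i ≤ 3) (hr : 0 < d r)
    (p ex : ℕ) [ExpChar k p] (F : MvPolynomial (MM (d r)) (AA k r)) (ℓ : ℕ → k)
    (X : Set (Pt k d)) (hX : CS X) (hv : ∀ z ∈ X, Fev r (p ^ ex) z F = 0)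
    (IH : ∀ n, Noeth (Set.univ : Set (Pt k (dJ d r n)))) :
    Noeth {x | x ∈ X ∧ ∃ φ, Fev r (p ^ ex) (act x φ) (DD d r (p ^ ex) ℓ F) ≠ 0} := by
  classical
  set q := p ^ ex with hq
  have hq0 : q ≠ 0 := (pow_pos (expChar_pos k p) _).ne'
  set h : Pt k d → k := fun z => Fev r q z (DD d r q ℓ F) with hh
  obtain ⟨hp, hhp⟩ := exists_toP (k := k) (d := d) r q (DD d r q ℓ F)
  obtain ⟨n1, hn1⟩ := ev_bound d hp
  obtain ⟨n, hnn, hF⟩ : ∃ n, n1 ≤ n ∧ ∀ m ∈ F.vars, ∀ a ∈ m.1, a < n := by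
    refine ⟨n1 + (F.vars.sup fun m => m.1.sup + 1), by omega, fun m hm a ha => ?_⟩
    have h1 : m.1.sup + 1 ≤ F.vars.sup fun m => m.1.sup + 1 :=
      Finset.le_sup (f := fun m : MM (d r) => m.1.sup + 1) hm
    have h2 := Multiset.le_sup ha
    omega
  have hloc : ∀ (x : Pt k d) (φ ψ : (ℕ →₀ k) →ₗ[k] (ℕ →₀ k)),
      (∀ i < n, φ (e k i) = ψ (e k i)) → h (act x φ) = h (act x ψ) := by
    intro x φ ψ H
    simp only [hh, ← hhp]
    exact hn1 x φ ψ fun i hi => H i (by omega)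
  -- h depends on the first coordinates, hence is good
  have hgood : Good r n h := by
    let P0 : (ℕ →₀ k) →ₗ[k] (ℕ →₀ k) := lm (fun i => if i < n then e k i else 0)
    have hP0 : ∀ z, h z = h (act z P0) := by
      intro z
      conv_lhs => rw [← act_id z]
      apply hloc
      intro i hi
      simp only [P0]
      rw [lm_e, if_pos hi]; rfl
    have hpoly : ∀ f : MvPolynomial (ι × Multiset ℕ) k, Good r n (fun z : Pt k d => ev (act z P0) f) := by
      intro f
      induction f using MvPolynomial.induction_on with
      | C a => exact ⟨C a, fun z => by simp [ev]⟩
      | add f g hf hg =>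
        obtain ⟨f', hf'⟩ := hf
        obtain ⟨g', hg'⟩ := hg
        exact ⟨f' + g', fun z => by beta_reduce at hf' hg' ⊢; rw [map_add, hf', hg', map_add]⟩
      | mul_X f x hf =>
        obtain ⟨f', hf'⟩ := hf
        have : Good r n (fun z : Pt k d => ev (act z P0) (MvPolynomial.X x)) := by
          by_cases hx : ∀ a ∈ x.2, a < n
          · have e1 : (fun z : Pt k d => ev (act z P0) (MvPolynomial.X x)) =
                fun z => (z x.1).toFun (x.2.map (e k) + Multiset.map (shv k n) 0) := by
              funext z
              rw [ev_X, act_apply, Multiset.map_map, Multiset.map_zero, add_zero]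
              congr 1
              apply Multiset.map_congr rfl
              intro a ha
              simp only [P0, Function.comp]
              rw [lm_e, if_pos (hx a ha)]
            rw [e1]
            by_cases hxr : x.1 = r ∧ x.2 = 0
            · refine ⟨0, fun z => ?_⟩
              rw [map_zero]
              symm
              apply (z x.1).deg
              rw [hxr.1, hxr.2]
              simpa using hr.ne
            · exact good_ne n hd x.1 x.2 hx 0 (by tauto)
          · push Not at hx
            obtain ⟨a, ha, han⟩ := hx
            refine ⟨0, fun z => ?_⟩
            beta_reduce
            rw [map_zero, ev_X, act_apply]
            obtain ⟨t, ht⟩ := Multiset.exists_cons_of_mem ha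
            rw [ht, Multiset.map_cons, Multiset.map_cons]
            have : P0 (e k a) = 0 := by
              simp only [P0]
              rw [lm_e, if_neg (by omega)]
            rw [this, Form.zero]
        obtain ⟨g', hg'⟩ := this
        exact ⟨f' * g', fun z => by beta_reduce at hf' hg' ⊢; rw [map_mul, hf', hg', map_mul]⟩
    obtain ⟨f, hf⟩ := hpoly hp
    exact ⟨f, fun z => (hf z).trans ((hhp _).trans (hP0 z).symm)⟩
  -- all coordinates
  let S : Submodule k (Pt k d → k) :=
    { carrier := {g | Gd r n q X h g}
      add_mem' := fun {a b} ha hb => Gd.add hgood ha hb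
      zero_mem' := Gd.const r n q X h 0
      smul_mem' := fun c g hg => (Gd.const r n q X h c).mul hg }
  have hS : ∀ s : Multiset (ℕ →₀ k), Multiset.card s = d r →
      (fun z : Pt k d => (z r).toFun (s.map (shv k n))) ∈ S := by
    intro s hs
    refine polar h2 h3 (d r) (hd r) S
      (fun s => fun z : Pt k d => (z r).toFun (s.map (shv k n))) ?_ ?_ s hs
    · intro x y s
      funext z
      simp [Form.add]
    · intro w
      obtain ⟨g, hg⟩ := key1 r n hd hr p ex F hF ℓ w X hX hv
      refine ⟨q, (g * (hgood.choose) ^ (q - 1)), fun z hz => ?_⟩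
      rw [map_mul, map_pow, hg z hz, hgood.choose_spec]
      simp only [Multiset.map_replicate]
      rw [← hq]
      have : h z ^ q = h z * h z ^ (q - 1) := by
        rw [← pow_succ', Nat.sub_add_cancel (Nat.pos_of_ne_zero hq0)]
      rw [this]
      simp only [hh]
      ring
  have hall : ∀ f : MvPolynomial (ι × Multiset ℕ) k, Gd r n q X h (fun z => ev z f) := by
    intro f
    induction f using MvPolynomial.induction_on with
    | C a =>
      have := Gd.const r n q X h a
      simpa [ev] using this
    | add f g hf hg =>
      have := Gd.add hgood hf hg
      simpa using this
    | mul_X f x hf =>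
      have : Gd r n q X h (fun z => ev z (MvPolynomial.X x)) := by
        simp only [ev_X]
        by_cases hx : x.1 ≠ r ∨ ∃ a ∈ x.2, a < n
        · have := good_coord (k := k) (d := d) (r := r) n hd x.1 x.2 0 hx
          simp only [Multiset.map_zero, add_zero] at this
          exact Gd.of_good this
        · push Not at hx
          obtain ⟨i, m⟩ := x
          obtain ⟨h1, h2⟩ := hx
          simp only at h1 h2
          subst h1
          by_cases hm : Multiset.card m = d i
          · have := hS (m.map (fun a => e k (a - n))) (by simpa using hm)
            have e1 : (fun z : Pt k d => (z i).toFun (m.map (e k))) =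
                fun z => (z i).toFun ((m.map (fun a => e k (a - n))).map (shv k n)) := by
              funext z
              congr 1
              rw [Multiset.map_map]
              apply Multiset.map_congr rfl
              intro a ha
              simp only [Function.comp, shv_e]
              rw [Nat.sub_add_cancel (h2 a ha)]
            rw [e1]
            exact this
          · have : (fun z : Pt k d => (z i).toFun (Multiset.map (e k) m)) = fun _ => 0 := by
              funext z
              exact (z i).deg _ (by simpa using hm)
            rw [this]
            exact Gd.const i n q X h 0
      have := hf.mul this
      simpa using this
  intro Z hZ hA
  let A : ℕ → Set (Pt k (dJ d r n)) := fun j => {y | ∃ x, x ∈ Z j ∧ x ∈ X ∧ h x ≠ 0 ∧ sh r n x = y}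
  have hAs : ∀ j, ∀ y ∈ A j, ∀ φ, act y φ ∈ A j := by
    rintro j y ⟨x, hx1, hx2, hx3, rfl⟩ φ
    refine ⟨_, (hZ j).stable x hx1 _, hX.stable x hx2 _, ?_, sh_act r n x φ⟩
    have := hloc x (lm (fun i => if i < n then e k i else shv k n (φ (e k (i - n)))))
      LinearMap.id (fun i hi => by rw [lm_e, if_pos hi]; rfl)
    rw [this, act_id]
    exact hx3
  let W : ℕ → Set (Pt k (dJ d r n)) := fun j => {y | ∀ p, (∀ x ∈ A j, ev x p = 0) → ev y p = 0}
  obtain ⟨N, hN⟩ := IH n W (fun j => cs_closure _ (hAs j)) (by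
    intro i j hij y hy g hg
    apply hy g
    rintro x ⟨x', h1, h2⟩
    exact hg _ ⟨x', hA hij h1, h2⟩)
  refine ⟨N, fun j hj x hx => ?_⟩
  obtain ⟨hxN, hxX, φ, hφ⟩ := hx
  let ψ : (ℕ →₀ k) →ₗ[k] (ℕ →₀ k) := lm (fun i => if i < n then φ (e k i) else e k (i - n))
  have hψ : ψ ∘ₗ shv k n = LinearMap.id := by
    apply Finsupp.lhom_ext'
    intro i
    ext1
    have : ψ (shv k n (e k i)) = e k i := by
      rw [shv_e]
      simp only [ψ]
      rw [lm_e, if_neg (by omega), Nat.add_sub_cancel]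
    simpa using this
  set y := act x ψ with hy
  have hyh : h y ≠ 0 := by
    have : h y = h (act x φ) := hloc x ψ φ (fun i hi => by
      simp only [ψ]
      rw [lm_e, if_pos hi])
    rw [this]; exact hφ
  suffices hyj : y ∈ Z j by
    have := (hZ j).stable y hyj (shv k n)
    rwa [hy, act_act, hψ, act_id] at this
  have hyN : y ∈ Z N := (hZ N).stable x hxN ψ
  have hyX : y ∈ X := hX.stable x hxX ψ
  apply (hZ j).closed
  intro f hf
  obtain ⟨M, g, hg⟩ := hall f
  beta_reduce at hg
  have hW : sh r n y ∈ W N := fun p hp => hp _ ⟨y, hyN, hyX, hyh, rfl⟩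
  have := hN j hj ⟨hW, trivial⟩ g (by
    rintro _ ⟨x', h1, h2, h3, rfl⟩
    rw [hg x' h2, hf x' h1, zero_pow hq0, mul_zero])
  rw [hg y hyX] at this
  rcases mul_eq_zero.mp this with h' | h'
  · exact absurd h' (pow_ne_zero _ hyh)
  · exact pow_eq_zero_iff hq0 |>.mp h'

end CubN

namespace CubN

open MvPolynomial

universe u
variable {k : Type u} [Field k]

theorem coeff_mkD {σ R : Type*} [CommRing R] (c : σ → R) (F : MvPolynomial σ R) (t : σ →₀ ℕ) :
    coeff t (mkDerivation R (fun m => (C (c m) : MvPolynomial σ R)) F) =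
      ∑ m ∈ F.vars, c m * (coeff (t + Finsupp.single m 1) F * ((t m : R) + 1)) := by
  classical
  have hsum : ∀ (S : Finset σ) (g : σ → Derivation R (MvPolynomial σ R) (MvPolynomial σ R)) (G),
      (∑ m ∈ S, g m) G = ∑ m ∈ S, g m G := by
    intro S g G
    induction S using Finset.induction_on with
    | empty => simp
    | insert a S ha ih => rw [Finset.sum_insert ha, Finset.sum_insert ha, Derivation.add_apply, ih]
  have h : mkDerivation R (fun m => (C (c m) : MvPolynomial σ R)) F =
      (∑ m ∈ F.vars, (C (c m) : MvPolynomial σ R) • (pderiv m : Derivation R _ _)) F := by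
    apply derivation_eq_of_forall_mem_vars
    intro i hi
    rw [mkDerivation_X, hsum]
    simp only [Derivation.coe_smul, Pi.smul_apply, pderiv_X, smul_eq_mul]
    rw [Finset.sum_eq_single i]
    · simp
    · intro b _ hb
      rw [Pi.single_eq_of_ne hb.symm, mul_zero]
    · intro h; exact absurd hi h
  rw [h, hsum]
  simp only [Derivation.coe_smul, Pi.smul_apply,
      smul_eq_mul, coeff_sum, coeff_C_mul, coeff_pderiv]

theorem coeff_DD {ι : Type} {d : ι → ℕ} (r : ι) (q : ℕ) (ℓ : ℕ → k)
    (F : MvPolynomial (MM (d r)) (AA k r)) (t : MM (d r) →₀ ℕ) :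
    coeff t (DD d r q ℓ F) = ∑ m ∈ F.vars, C ((m.1.map ℓ).prod ^ q) *
      (coeff (t + Finsupp.single m 1) F * ((t m : AA k r) + 1)) :=
  coeff_mkD _ _ _

theorem prod_X_eq (m : Multiset ℕ) :
    (m.map (X : ℕ → MvPolynomial ℕ k)).prod = monomial (Multiset.toFinsupp m) 1 := by
  induction m using Multiset.induction_on with
  | empty => simp
  | cons a m ih =>
    rw [Multiset.map_cons, Multiset.prod_cons, ih, ← Multiset.singleton_add, map_add,
      Multiset.toFinsupp_singleton, X, monomial_mul, mul_one]

theorem choose_l [Infinite k] {ι : Type} {d : ι → ℕ} (r : ι) (q : ℕ) (hq : q ≠ 0)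
    (F : MvPolynomial (MM (d r)) (AA k r)) (y : Pt k (dP d r)) (s : MM (d r) →₀ ℕ)
    (hs : ev y (coeff s F) ≠ 0) (m0 : MM (d r)) (hm : ((s m0 : ℕ) : k) ≠ 0) :
    ∃ ℓ : ℕ → k, ∃ t, ev y (coeff t (DD d r q ℓ F)) ≠ 0 := by
  classical
  have hs0 : s m0 ≠ 0 := fun h => hm (by simp [h])
  set t := s - Finsupp.single m0 1 with ht
  have hts : t + Finsupp.single m0 1 = s := by
    apply tsub_add_cancel_of_le
    rw [Finsupp.single_le_iff]; omega
  have hm0 : m0 ∈ F.vars := by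
    rw [mem_vars_iff_mem_support]
    refine ⟨s, ?_, ?_⟩
    · rw [mem_support_iff]; intro h; rw [h] at hs; simp at hs
    · simpa using hs0
  let b : MM (d r) → k := fun m => ev y (coeff (t + Finsupp.single m 1) F) * ((t m : k) + 1)
  let G : MvPolynomial ℕ k := ∑ m ∈ F.vars, C (b m) * (m.1.map X).prod ^ q
  have hG : G ≠ 0 := by
    intro h
    have h1 : coeff (q • Multiset.toFinsupp m0.1) G = b m0 := by
      simp only [G, coeff_sum, coeff_C_mul, prod_X_eq, monomial_pow, one_pow, coeff_monomial]
      rw [Finset.sum_eq_single m0]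
      · simp
      · intro m _ hmm
        rw [if_neg, mul_zero]
        intro h'
        apply hmm
        apply Subtype.ext
        apply Multiset.toFinsupp.injective
        ext a
        have := DFunLike.congr_fun h' a
        simpa [hq] using this
      · intro h; exact absurd hm0 h
    rw [h, coeff_zero] at h1
    have h2 : (t m0 : k) + 1 = s m0 := by
      rw [← hts]; simp
    have : b m0 = ev y (coeff s F) * (s m0 : k) := by
      simp only [b, hts, h2]
    rw [this] at h1
    exact mul_ne_zero hs hm h1.symm
  obtain ⟨ℓ, hℓ⟩ : ∃ ℓ, eval ℓ G ≠ 0 := by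
    by_contra hc
    push Not at hc
    exact hG (MvPolynomial.funext fun ℓ => by rw [hc, map_zero])
  refine ⟨ℓ, t, ?_⟩
  have : ev y (coeff t (DD d r q ℓ F)) = eval ℓ G := by
    rw [coeff_DD]
    have hc : ∀ c : k, ev y (C c) = c := fun c => by simp [ev]
    simp only [G, map_sum, b]
    apply Finset.sum_congr rfl
    intro m _
    rw [map_mul, hc, map_mul, map_add, map_natCast, map_one, map_mul, eval_C, map_pow,
      map_multiset_prod, Multiset.map_map]
    simp only [Function.comp_def, eval_X]
    ring
  rw [this]; exact hℓ

theorem drop_coeff {ι : Type} {d : ι → ℕ} (r : ι) (Y : Set (Pt k (dP d r)))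
    (F : MvPolynomial (MM (d r)) (AA k r)) :
    ∃ F0 : MvPolynomial (MM (d r)) (AA k r),
      (∀ s, coeff s F0 ≠ 0 → ∃ y ∈ Y, ev y (coeff s F0) ≠ 0) ∧
      (∀ s, coeff s F0 ≠ 0 → coeff s F ≠ 0) ∧
      (∀ s, ∀ y ∈ Y, ev y (coeff s F0) = ev y (coeff s F)) ∧
      (∀ q (z : Pt k d), pr r z ∈ Y → Fev r q z F0 = Fev r q z F) := by
  classical
  let P : (MM (d r) →₀ ℕ) → Prop := fun s => ∃ y ∈ Y, ev y (coeff s F) ≠ 0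
  have hco : ∀ s, coeff s (∑ s ∈ F.support.filter P, monomial s (coeff s F)) =
      if P s then coeff s F else 0 := by
    intro s
    rw [coeff_sum]
    simp only [coeff_monomial]
    rw [Finset.sum_ite_eq' ]
    simp only [Finset.mem_filter, mem_support_iff]
    by_cases h : coeff s F = 0 <;> simp [h]
  refine ⟨∑ s ∈ F.support.filter P, monomial s (coeff s F), ?_, ?_, ?_, ?_⟩
  · intro s hs
    rw [hco] at hs ⊢
    split_ifs at hs ⊢ with h
    · exact h
    · exact absurd rfl hs
  · intro s hs
    rw [hco] at hs
    split_ifs at hs with h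
    · exact hs
    · exact absurd rfl hs
  · intro s y hy
    rw [hco]
    split_ifs with h
    · rfl
    · rw [map_zero]
      by_contra hc
      exact h ⟨y, hy, fun h => hc h.symm⟩
  · intro q z hz
    conv_rhs => rw [← support_sum_monomial_coeff F]
    rw [map_sum, map_sum, Finset.sum_filter]
    apply Finset.sum_congr rfl
    intro s _
    split_ifs with h
    · rfl
    · have : ev (pr r z) (coeff s F) = 0 := by
        by_contra hc
        exact h ⟨_, hz, hc⟩
      rw [Fev, eval₂Hom_monomial]
      simp [this]

theorem Fev_expand {ι : Type} {d : ι → ℕ} (r : ι) (p ex : ℕ) (z : Pt k d)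
    (F : MvPolynomial (MM (d r)) (AA k r)) :
    Fev r (p ^ ex) z (expand p F) = Fev r (p ^ (ex + 1)) z F := by
  have : (Fev r (p ^ ex) z).comp (expand p).toRingHom = Fev r (p ^ (ex + 1)) z := by
    apply MvPolynomial.ringHom_ext
    · intro a; simp [Fev]
    · intro m; simp [Fev, pow_succ, pow_mul]
  rw [← this]; rfl

theorem inner [Infinite k] (h2 : (2 : k) ≠ 0) (h3 : (3 : k) ≠ 0) {ι : Type} {d : ι → ℕ}
    (r : ι) (hd : ∀ i, d i ≤ 3) (hr : 0 < d r) (p : ℕ) [ExpChar k p]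
    (IH : ∀ n, Noeth (Set.univ : Set (Pt k (dJ d r n))))
    (Y : Set (Pt k (dP d r))) (hY : CS Y)
    (IHY : ∀ Y' ⊆ Y, CS Y' → Y' ≠ Y → Noeth (pr r ⁻¹' Y' : Set (Pt k d))) (N : ℕ) :
    ∀ (ex : ℕ) (F : MvPolynomial (MM (d r)) (AA k r)) (X : Set (Pt k d)),
      (∀ s, coeff s F ≠ 0 → s.degree < N) → CS X → (∀ z ∈ X, pr r z ∈ Y) →
      (∀ z ∈ X, Fev r (p ^ ex) z F = 0) →
      (∃ y ∈ Y, ∃ s, ev y (coeff s F) ≠ 0) → Noeth X := by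
  classical
  induction N using Nat.strong_induction_on with
  | _ N ihN =>
  intro ex F X hN hX hXY hv ⟨y0, hy0, s0, hs0⟩
  have hq0 : p ^ ex ≠ 0 := (pow_pos (expChar_pos k p) _).ne'
  obtain ⟨F0, c1, c2, c3, c4⟩ := drop_coeff r Y F
  have hN0 : ∀ s, coeff s F0 ≠ 0 → s.degree < N := fun s hs => hN s (c2 s hs)
  have hv0 : ∀ z ∈ X, Fev r (p ^ ex) z F0 = 0 := fun z hz => by
    rw [c4 _ _ (hXY z hz), hv z hz]
  rw [← c3 s0 y0 hy0] at hs0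
  have hs0' : coeff s0 F0 ≠ 0 := fun h => hs0 (by rw [h, map_zero])
  by_cases ha : ∀ s, coeff s F0 ≠ 0 → s = 0
  · -- constant case
    have hC : F0 = C (coeff 0 F0) := by
      ext1 s
      rw [coeff_C]
      split_ifs with h
      · rw [← h]
      · by_contra hc
        exact h (ha s hc).symm
    have hs00 := ha s0 hs0'
    subst hs00
    refine Noeth.mono (IHY (Y ∩ VV (dP d r) {coeff 0 F0}) Set.inter_subset_left
      (hY.inter (cs_VV _ _)) ?_) ?_
    · intro h
      rw [← h] at hy0
      have := hy0.2 LinearMap.id _ rfl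
      rw [act_id] at this
      exact hs0 this
    · intro z hz
      refine ⟨hXY z hz, fun φ P hP => ?_⟩
      rw [Set.mem_singleton_iff] at hP
      subst hP
      have := hv0 _ (hX.stable z hz φ)
      rw [hC, Fev, eval₂Hom_C] at this
      exact this
  by_cases hb : ∃ s, coeff s F0 ≠ 0 ∧ ∃ m0, ((s m0 : ℕ) : k) ≠ 0
  · obtain ⟨s, hs, m0, hm0⟩ := hb
    obtain ⟨y, hy, hys⟩ := c1 s hs
    obtain ⟨ℓ, t, ht⟩ := choose_l r (p ^ ex) hq0 F0 y s hys m0 hm0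
    obtain ⟨g, hg⟩ := exists_toP (k := k) (d := d) r (p ^ ex) (DD d r (p ^ ex) ℓ F0)
    have hN1 : s.degree < N := hN0 s hs
    have n1 : Noeth (X ∩ VV d {g}) := by
      refine ihN (N - 1) (by omega) ex (DD d r (p ^ ex) ℓ F0) _ ?_ (hX.inter (cs_VV _ _))
        (fun z hz => hXY z hz.1) ?_ ⟨y, hy, t, ht⟩
      · intro t ht
        rw [coeff_DD] at ht
        obtain ⟨m, _, hm⟩ := Finset.exists_ne_zero_of_sum_ne_zero ht
        have := hN0 (t + Finsupp.single m 1) (fun h => hm (by rw [h]; simp))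
        rw [map_add, Finsupp.degree_single] at this
        omega
      · intro z hz
        rw [← hg]
        have := hz.2 LinearMap.id g rfl
        rwa [act_id] at this
    refine Noeth.mono (n1.union (open_part h2 h3 r hd hr p ex F0 ℓ X hX hv0 IH)) ?_
    intro x hx
    by_cases hh : x ∈ VV d {g}
    · exact Or.inl ⟨hx, hh⟩
    · right
      refine ⟨hx, ?_⟩
      by_contra hc
      push Not at hc
      apply hh
      intro φ P hP
      rw [Set.mem_singleton_iff] at hP
      rw [hP, hg]
      exact hc φ
  · push Not at hb ha
    obtain ⟨s1, hs1, hs1'⟩ := ha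
    obtain ⟨m1, hm1⟩ := Finsupp.ne_iff.mp hs1'
    rw [Finsupp.zero_apply] at hm1
    have hN1 := hN0 s1 hs1
    have hdeg : s1 m1 ≤ s1.degree := Finsupp.le_degree m1 s1
    rcases ‹ExpChar k p› with _ | ⟨hp⟩
    · exact absurd (Nat.cast_eq_zero.mp (hb s1 hs1 m1)) hm1
    have hpd : ∀ s, coeff s F0 ≠ 0 → ∀ m, p ∣ s m := fun s hs m =>
      (CharP.cast_eq_zero_iff k p _).mp (hb s hs m)
    let F1 : MvPolynomial (MM (d r)) (AA k r) :=
      ∑ s ∈ F0.support, monomial (s.mapRange (fun a => a / p) (by simp)) (coeff s F0)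
    have hF1 : expand p F1 = F0 := by
      conv_rhs => rw [← support_sum_monomial_coeff F0]
      simp only [F1, map_sum]
      apply Finset.sum_congr rfl
      intro s hs
      rw [expand_monomial]
      have : p • (s.mapRange (fun a => a / p) (by simp)) = s := by
        ext m
        simp only [Finsupp.smul_apply, Finsupp.mapRange_apply, smul_eq_mul]
        exact Nat.mul_div_cancel' (hpd s (mem_support_iff.mp hs) m)
      rw [this]
    have hco : ∀ s, coeff s F1 = coeff (p • s) F0 := by
      intro s
      rw [← hF1, coeff_expand_smul _ hp.ne_zero]
    have hp2 := hp.two_le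
    refine ihN (N - 1) (by omega) (ex + 1) F1 X ?_ hX hXY ?_ ?_
    · intro s hs
      rw [hco] at hs
      have := hN0 _ hs
      have h5 : (p • s).degree = p * s.degree := by simp
      rw [h5] at this
      rcases Nat.eq_zero_or_pos s.degree with h6 | h6
      · omega
      · have : 2 * s.degree ≤ p * s.degree := Nat.mul_le_mul_right _ hp2
        omega
    · intro z hz
      rw [← Fev_expand, hF1]
      exact hv0 z hz
    · refine ⟨y0, hy0, s0.mapRange (fun a => a / p) (by simp), ?_⟩
      rw [hco]
      have : p • (s0.mapRange (fun a => a / p) (by simp)) = s0 := by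
        ext m
        simp only [Finsupp.smul_apply, Finsupp.mapRange_apply, smul_eq_mul]
        exact Nat.mul_div_cancel' (hpd s0 hs0' m)
      rw [this]
      exact hs0

theorem cs_pr {ι : Type} {d : ι → ℕ} (r : ι) (Y : Set (Pt k (dP d r))) (hY : CS Y) :
    CS (pr r ⁻¹' Y : Set (Pt k d)) := by
  refine ⟨fun x hx => hY.closed _ fun f hf => ?_, fun x hx φ => hY.stable _ hx φ⟩
  obtain ⟨g, hg⟩ := exists_toP (k := k) (d := d) r 1 (C f)
  have hg' : ∀ z : Pt k d, ev z g = ev (pr r z) f := fun z => by rw [hg, Fev, eval₂Hom_C]; rfl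
  rw [← hg']
  exact hx g fun z hz => by rw [hg']; exact hf _ hz

theorem exists_fromP {ι : Type} {d : ι → ℕ} (r : ι) (f : MvPolynomial (ι × Multiset ℕ) k) :
    ∃ F : MvPolynomial (MM (d r)) (AA k r), ∀ z : Pt k d, Fev r 1 z F = ev z f := by
  classical
  let a : ι × Multiset ℕ → MvPolynomial (MM (d r)) (AA k r) := fun x =>
    if h : x.1 = r then (if h' : Multiset.card x.2 = d r then X ⟨x.2, h'⟩ else 0)
    else C (X (⟨x.1, h⟩, x.2))
  refine ⟨eval₂Hom (C.comp C) a f, fun z => ?_⟩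
  have : (Fev r 1 z).comp (eval₂Hom (C.comp C) a) = (ev z).toRingHom := by
    apply MvPolynomial.ringHom_ext
    · intro c; simp [Fev, ev]
    · rintro ⟨i, m⟩
      simp only [RingHom.comp_apply, eval₂Hom_X', a, AlgHom.toRingHom_eq_coe, RingHom.coe_coe, ev_X]
      split_ifs with h h'
      · subst h; simp [Fev]
      · subst h
        rw [map_zero]
        exact ((z i).deg _ (by simpa using h')).symm
      · rw [Fev, eval₂Hom_C]
        simp [ev_X, pr]
  have := RingHom.congr_fun this f
  exact this

theorem step [Infinite k] (h2 : (2 : k) ≠ 0) (h3 : (3 : k) ≠ 0) {ι : Type} {d : ι → ℕ}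
    (r : ι) (hd : ∀ i, d i ≤ 3) (hr : 0 < d r)
    (IH : ∀ n, Noeth (Set.univ : Set (Pt k (dJ d r n))))
    (IHP : Noeth (Set.univ : Set (Pt k (dP d r)))) :
    Noeth (Set.univ : Set (Pt k d)) := by
  classical
  obtain ⟨p, hp⟩ := ExpChar.exists k
  have main : ∀ Y : {Y : Set (Pt k (dP d r)) // CS Y}, Noeth (pr r ⁻¹' Y.1 : Set (Pt k d)) := by
    intro Y
    induction Y using (wf_of_noeth IHP).induction with
    | _ Y ih =>
    obtain ⟨Y, hY⟩ := Y
    apply noeth_of_proper _ (cs_pr r Y hY)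
    intro X hXs hX hne
    obtain ⟨z0, hz0, hz0X⟩ : ∃ z0, z0 ∈ (pr r ⁻¹' Y : Set (Pt k d)) ∧ z0 ∉ X := by
      by_contra hc
      push Not at hc
      exact hne (Set.Subset.antisymm hXs hc)
    obtain ⟨f, hf, hf0⟩ : ∃ f, (∀ z ∈ X, ev z f = 0) ∧ ev z0 f ≠ 0 := by
      by_contra hc
      push Not at hc
      exact hz0X (hX.closed z0 hc)
    obtain ⟨F, hF⟩ := exists_fromP (k := k) (d := d) r f
    refine inner h2 h3 r hd hr p IH Y hY (fun Y' hs hc hn => ih ⟨Y', hc⟩ ?_)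
      (F.support.sup Finsupp.degree + 1) 0 F X ?_ hX hXs ?_ ?_
    · exact lt_of_le_of_ne hs (fun h => hn (congrArg Subtype.val h))
    · intro s hs
      have : s.degree ≤ F.support.sup Finsupp.degree := Finset.le_sup (mem_support_iff.mpr hs)
      omega
    · intro z hz
      rw [pow_zero, hF, hf z hz]
    · refine ⟨pr r z0, hz0, ?_⟩
      by_contra hc
      push Not at hc
      apply hf0
      rw [← hF, ← support_sum_monomial_coeff F, map_sum]
      apply Finset.sum_eq_zero
      intro s _
      rw [Fev, eval₂Hom_monomial]
      simp [hc s]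
  have hu : CS (Set.univ : Set (Pt k (dP d r))) := ⟨fun _ _ => trivial, fun _ _ _ => trivial⟩
  exact main ⟨Set.univ, hu⟩

end CubN

namespace CubN

open MvPolynomial

universe u
variable {k : Type u} [Field k]

theorem noeth_all [Infinite k] (h2 : (2 : k) ≠ 0) (h3 : (3 : k) ≠ 0) (s : Multiset ℕ) :
    ∀ (ι : Type) [Fintype ι] (d : ι → ℕ), (∀ i, d i ≤ 3) → (∑ i, ({d i} : Multiset ℕ)) = s →
      Noeth (Set.univ : Set (Pt k d)) := by
  classical
  induction s using (WellFounded.cutExpand (Nat.lt_wfRel.wf)).induction with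
  | _ s ih =>
  intro ι _ d hd hs
  by_cases h0 : ∀ i, d i = 0
  · exact noeth_base d h0
  push Not at h0
  obtain ⟨i0, hi0⟩ := h0
  obtain ⟨r, -, hr⟩ := Finset.exists_max_image Finset.univ d ⟨i0, Finset.mem_univ _⟩
  have hr0 : 0 < d r := lt_of_lt_of_le (Nat.pos_of_ne_zero hi0) (hr i0 (Finset.mem_univ _))
  have hsub : (∑ i : {i : ι // i ≠ r}, ({d i.1} : Multiset ℕ)) + {d r} = s := by
    rw [← hs, Fintype.sum_eq_add_sum_subtype_ne _ r, add_comm]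
  refine step h2 h3 r hd hr0 (fun n => ?_) ?_
  · haveI : Finite (Set.Iic (3 • Multiset.range n)) := Set.toFinite _
    haveI : Fintype {p : ι × Set.Iic (3 • Multiset.range n) //
      0 < Multiset.card p.2.1 ∧ Multiset.card p.2.1 ≤ d p.1} := Fintype.ofFinite _
    refine ih (∑ j, ({dJ d r n j} : Multiset ℕ)) ?_ (JJ d r n) (dJ d r n) ?_ rfl
    · refine ⟨∑ p : {p : ι × Set.Iic (3 • Multiset.range n) //
        0 < Multiset.card p.2.1 ∧ Multiset.card p.2.1 ≤ d p.1}, {dJ d r n (Sum.inr p)}, d r,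
        ?_, ?_⟩
      · intro a ha
        rw [Multiset.mem_sum] at ha
        obtain ⟨p, -, hp⟩ := ha
        rw [Multiset.mem_singleton] at hp
        have h1 := hr p.1.1 (Finset.mem_univ _)
        have h3 := p.2
        simp only [dJ, Sum.elim_inr] at hp
        show a < d r
        omega
      · rw [Fintype.sum_sum_type, ← hsub]
        simp only [dJ, Sum.elim_inl]
        abel
    · rintro (i | p)
      · exact hd i.1
      · have := hd p.1.1
        simp only [dJ, Sum.elim_inr]
        omega
  · refine ih _ ?_ {i : ι // i ≠ r} (dP d r) (fun i => hd i.1) rfl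
    refine ⟨0, d r, by simp, ?_⟩
    rw [add_zero, ← hsub]

theorem line_poly {ι : Type} {d : ι → ℕ} (x : Pt k d) (ψ : (ℕ →₀ k) →ₗ[k] (ℕ →₀ k))
    (P : MvPolynomial (ι × Multiset ℕ) k) :
    ∃ Q : Polynomial k, ∀ t, Q.eval t = ev (act x (LinearMap.id + t • ψ)) P := by
  have h1 : ∀ (i : ι) (m : Multiset ℕ) (s : Multiset (ℕ →₀ k)), ∃ b : Polynomial k, ∀ t : k,
      b.eval t = (x i).toFun (m.map (fun a => e k a + t • ψ (e k a)) + s) := by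
    intro i m
    induction m using Multiset.induction_on with
    | empty => intro s; exact ⟨Polynomial.C ((x i).toFun s), fun t => by simp⟩
    | cons a m ih =>
      intro s
      obtain ⟨b1, hb1⟩ := ih (e k a ::ₘ s)
      obtain ⟨b2, hb2⟩ := ih (ψ (e k a) ::ₘ s)
      refine ⟨b1 + Polynomial.X * b2, fun t => ?_⟩
      rw [Polynomial.eval_add, Polynomial.eval_mul, Polynomial.eval_X, hb1, hb2,
        Multiset.map_cons, Multiset.cons_add, Form.lin, Multiset.add_cons, Multiset.add_cons]
  choose b hb using fun p : ι × Multiset ℕ => h1 p.1 p.2 0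
  refine ⟨aeval b P, fun t => ?_⟩
  have : (Polynomial.aeval t : Polynomial k →ₐ[k] k).comp (aeval b) =
      ev (act x (LinearMap.id + t • ψ)) := by
    apply MvPolynomial.algHom_ext
    intro p
    rw [AlgHom.comp_apply, aeval_X, ev_X, act_apply, Polynomial.coe_aeval_eq_eval, hb p t,
      add_zero, Multiset.map_map]
    rfl
  rw [← this, AlgHom.comp_apply, Polynomial.coe_aeval_eq_eval]

/-- linear maps are limits of finitary automorphisms -/
theorem density [Infinite k] {ι : Type} {d : ι → ℕ} (x : Pt k d)
    (P : MvPolynomial (ι × Multiset ℕ) k)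
    (H : ∀ g : (ℕ →₀ k) ≃ₗ[k] (ℕ →₀ k), IsGLinf g → ev (act x g.symm.toLinearMap) P = 0)
    (φ : (ℕ →₀ k) →ₗ[k] (ℕ →₀ k)) : ev (act x φ) P = 0 := by
  classical
  obtain ⟨n, hn⟩ := ev_bound d P
  let ψ : (ℕ →₀ k) →ₗ[k] (ℕ →₀ k) := lm (fun i => if i < n then φ (e k i) - e k i else 0)
  have h1 : ev (act x φ) P = ev (act x (LinearMap.id + (1 : k) • ψ)) P := by
    apply hn
    intro i hi
    rw [one_smul, LinearMap.add_apply, LinearMap.id_apply]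
    simp only [ψ]
    rw [lm_e, if_pos hi]
    abel
  obtain ⟨N, hnN, hN⟩ : ∃ N, n ≤ N ∧ ∀ i < n, ∀ j ∈ (φ (e k i)).support, j < N := by
    refine ⟨n + (Finset.range n).sup (fun i => (φ (e k i)).support.sup id + 1), by omega, ?_⟩
    intro i hi j hj
    have a1 : (φ (e k i)).support.sup id + 1 ≤
        (Finset.range n).sup (fun i => (φ (e k i)).support.sup id + 1) :=
      Finset.le_sup (f := fun i => (φ (e k i)).support.sup id + 1) (Finset.mem_range.mpr hi)
    have a2 : j ≤ (φ (e k i)).support.sup id := Finset.le_sup (f := id) hj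
    omega
  set S : Submodule k (ℕ →₀ k) := Finsupp.supported k k {j | j < N} with hS
  have hSspan : Submodule.span k {v : ℕ →₀ k | ∃ j < N, v = Finsupp.single j (1 : k)} = S := by
    rw [hS, Finsupp.supported_eq_span_single]
    congr 1
    ext v
    simp [eq_comm]
  have hSe : ∀ i < N, e k i ∈ S := fun i hi => by
    rw [hS]; exact Finsupp.single_mem_supported k _ hi
  have hψS : ∀ v, ψ v ∈ S := by
    intro v
    simp only [ψ, lm]
    rw [Finsupp.linearCombination_apply]
    apply Submodule.sum_mem
    intro i _
    apply S.smul_mem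
    split_ifs with hi
    · apply S.sub_mem _ (hSe i (by omega))
      rw [hS, Finsupp.mem_supported]
      intro j hj
      exact hN i hi j hj
    · exact S.zero_mem
  haveI : FiniteDimensional k S := by
    rw [← hSspan]
    apply FiniteDimensional.span_of_finite
    have : {v : ℕ →₀ k | ∃ j < N, v = Finsupp.single j (1 : k)} =
        (fun j => Finsupp.single j (1 : k)) '' {j | j < N} := by
      ext v; simp [eq_comm]
    rw [this]
    exact (Set.finite_lt_nat N).image _
  let ψS : Module.End k S := ψ.restrict (fun v _ => hψS v)
  have hfin : {t : k | Module.End.HasEigenvalue (R := k) (M := S) ψS (-t⁻¹)}.Finite := by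
    have := Module.End.finite_hasEigenvalue (R := k) (M := S) ψS
    refine Set.Finite.preimage (f := fun t : k => -t⁻¹) ?_ this
    intro a _ b _ hab
    simpa using hab
  obtain ⟨Q, hQ⟩ := line_poly x ψ P
  have hQ0 : Q = 0 := by
    apply Polynomial.eq_zero_of_infinite_isRoot
    refine Set.Infinite.mono ?_ (hfin.union (Set.finite_singleton 0)).infinite_compl
    intro t ht
    simp only [Set.mem_compl_iff, Set.mem_union, Set.mem_ofPred_eq, Set.mem_singleton_iff,
      not_or] at ht
    obtain ⟨ht1, ht0⟩ := ht
    show Q.eval t = 0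
    rw [hQ]
    set G : (ℕ →₀ k) →ₗ[k] (ℕ →₀ k) := LinearMap.id + t • ψ with hG
    have hGv : ∀ v, G v = v + t • ψ v := fun v => rfl
    have hinjS : ∀ v ∈ S, G v = 0 → v = 0 := by
      intro v hv h0
      by_contra hv0
      apply ht1
      apply Module.End.hasEigenvalue_of_hasEigenvector (x := (⟨v, hv⟩ : S))
      rw [Module.End.hasEigenvector_iff, Module.End.mem_eigenspace_iff]
      constructor
      · apply Subtype.ext
        show ψ v = (-t⁻¹) • v
        rw [hGv] at h0
        have : v = -(t • ψ v) := eq_neg_of_add_eq_zero_left h0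
        conv_rhs => rw [this]
        rw [smul_neg, neg_smul, neg_neg, smul_smul, inv_mul_cancel₀ ht0, one_smul]
      · intro h; exact hv0 (congrArg Subtype.val h)
    have hinj : Function.Injective G := by
      rw [injective_iff_map_eq_zero]
      intro v h0
      apply hinjS v _ h0
      rw [hGv] at h0
      rw [eq_neg_of_add_eq_zero_left h0]
      exact S.neg_mem (S.smul_mem _ (hψS v))
    have hGS : ∀ v ∈ S, G v ∈ S := fun v hv => S.add_mem hv (S.smul_mem _ (hψS v))
    let GS : S →ₗ[k] S := G.restrict hGS
    have hGSi : Function.Injective GS := by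
      intro a b hab
      exact Subtype.ext (hinj (congrArg Subtype.val hab))
    have hGSs : Function.Surjective GS := (LinearMap.injective_iff_surjective (K := k) (V := S) (f := GS)).mp hGSi
    have hsS : ∀ y ∈ S, ∃ v ∈ S, G v = y := by
      intro y hy
      obtain ⟨v, hv⟩ := hGSs ⟨y, hy⟩
      exact ⟨v.1, v.2, congrArg Subtype.val hv⟩
    have hsurj : Function.Surjective G := by
      intro y
      obtain ⟨v, hv, hv'⟩ := hsS (-(t • ψ y)) (S.neg_mem (S.smul_mem _ (hψS y)))
      refine ⟨y + v, ?_⟩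
      rw [map_add, hv', hGv]
      abel
    let E := LinearEquiv.ofBijective G ⟨hinj, hsurj⟩
    have hE : ∀ v, E v = G v := fun v => rfl
    have := H E.symm ⟨N, ?_, ?_⟩
    · rw [LinearEquiv.symm_symm] at this
      exact this
    · intro i hi
      rw [LinearEquiv.symm_apply_eq, hE, hGv]
      have : ψ (e k i) = 0 := by
        simp only [ψ]
        rw [lm_e, if_neg (by omega)]
      rw [this, smul_zero, add_zero]
    · rw [hSspan]
      ext v
      rw [Submodule.mem_map]
      constructor
      · rintro ⟨w, hw, rfl⟩
        obtain ⟨u, hu, rfl⟩ := hsS w hw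
        have : E.symm (G u) = u := by rw [← hE, LinearEquiv.symm_apply_apply]
        show E.symm (G u) ∈ S
        rw [this]; exact hu
      · intro hv
        refine ⟨G v, hGS v hv, ?_⟩
        show E.symm (G v) = v
        rw [← hE, LinearEquiv.symm_apply_apply]
  rw [h1, ← hQ, hQ0, Polynomial.eval_zero]

theorem map_three {α : Type*} (v : Fin 3 → α) :
    (Finset.univ : Finset (Fin 3)).val.map v = {v 0, v 1, v 2} := by
  rfl

theorem perm_three {α : Type*} (w v : Fin 3 → α) (h : (Finset.univ : Finset (Fin 3)).val.map w =
    (Finset.univ : Finset (Fin 3)).val.map v) : ∃ σ : Equiv.Perm (Fin 3), w = v ∘ σ := by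
  have h' : [w 0, w 1, w 2].Perm [v 0, v 1, v 2] := Multiset.coe_eq_coe.mp h
  rw [← List.mem_permutations] at h'
  have key : ∀ a b c : Fin 3, ∀ σ : Equiv.Perm (Fin 3), σ 0 = a → σ 1 = b → σ 2 = c →
      w 0 = v a → w 1 = v b → w 2 = v c → ∃ σ : Equiv.Perm (Fin 3), w = v ∘ σ := by
    rintro _ _ _ σ rfl rfl rfl h0 h1 h2
    refine ⟨σ, ?_⟩
    funext j
    fin_cases j
    · exact h0
    · exact h1
    · exact h2
  simp [List.permutations, List.permutationsAux, List.permutationsAux.rec,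
    List.permutationsAux2] at h'
  rcases h' with h | h | h | h | h | h
  · exact key 0 1 2 1 (by decide) (by decide) (by decide) h.1 h.2.1 h.2.2
  · exact key 1 0 2 (Equiv.swap 0 1) (by decide) (by decide) (by decide) h.1 h.2.1 h.2.2
  · exact key 2 1 0 (Equiv.swap 0 2) (by decide) (by decide) (by decide) h.1 h.2.1 h.2.2
  · exact key 1 2 0 (Equiv.swap 0 1 * Equiv.swap 1 2) (by decide) (by decide) (by decide)
      h.1 h.2.1 h.2.2
  · exact key 2 0 1 (Equiv.swap 0 2 * Equiv.swap 1 2) (by decide) (by decide) (by decide)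
      h.1 h.2.1 h.2.2
  · exact key 0 2 1 (Equiv.swap 1 2) (by decide) (by decide) (by decide) h.1 h.2.1 h.2.2

open Classical in
noncomputable def symFun (T : MultilinearMap k (fun _ : Fin 3 => (ℕ →₀ k)) k)
    (s : Multiset (ℕ →₀ k)) : k :=
  if h : ∃ v : Fin 3 → (ℕ →₀ k), (Finset.univ : Finset (Fin 3)).val.map v = s then T h.choose else 0

theorem symFun_eq {T : MultilinearMap k (fun _ : Fin 3 => (ℕ →₀ k)) k} (hT : IsSymTri T)
    (v : Fin 3 → (ℕ →₀ k)) : symFun T ((Finset.univ : Finset (Fin 3)).val.map v) = T v := by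
  have h : ∃ w : Fin 3 → (ℕ →₀ k), (Finset.univ : Finset (Fin 3)).val.map w =
    (Finset.univ : Finset (Fin 3)).val.map v := ⟨v, rfl⟩
  rw [symFun, dif_pos h]
  obtain ⟨σ, hσ⟩ := perm_three _ _ h.choose_spec
  rw [hσ]
  exact hT σ v

theorem symFun_eq' {T : MultilinearMap k (fun _ : Fin 3 => (ℕ →₀ k)) k} (hT : IsSymTri T)
    (a b c : ℕ →₀ k) : symFun T {a, b, c} = T ![a, b, c] :=
  symFun_eq hT ![a, b, c]

noncomputable def toPt (T : MultilinearMap k (fun _ : Fin 3 => (ℕ →₀ k)) k) (hT : IsSymTri T) :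
    Pt k (fun _ : Unit => 3) := fun _ =>
  { toFun := symFun T
    deg := fun s hs => by
      rw [symFun, dif_neg]
      rintro ⟨v, rfl⟩
      simp at hs
    lin := fun a x y s => by
      by_cases hs : Multiset.card s = 2
      · obtain ⟨b, c, rfl⟩ := Multiset.card_eq_two.mp hs
        have h1 : ∀ v, symFun T (v ::ₘ {b, c}) = T (Fin.cons v ![b, c]) := fun v =>
          symFun_eq' hT v b c
        rw [h1, h1, h1]
        rw [T.cons_add, T.cons_smul, smul_eq_mul]
      · have h1 : ∀ v, symFun T (v ::ₘ s) = 0 := by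
          intro v
          rw [symFun, dif_neg]
          rintro ⟨w, hw⟩
          have := congrArg Multiset.card hw
          simp at this
          omega
        rw [h1, h1, h1]; simp }

theorem act_toPt (T : MultilinearMap k (fun _ : Fin 3 => (ℕ →₀ k)) k) (hT : IsSymTri T)
    (φ : (ℕ →₀ k) →ₗ[k] (ℕ →₀ k)) (hT' : IsSymTri (T.compLinearMap (fun _ => φ))) :
    act (toPt T hT) φ = toPt (T.compLinearMap (fun _ => φ)) hT' := by
  funext i
  have : ∀ s, ((act (toPt T hT) φ) i).toFun s =
      (toPt (T.compLinearMap (fun _ => φ)) hT' i).toFun s := by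
    intro s
    by_cases hs : Multiset.card s = 3
    · obtain ⟨a, b, c, rfl⟩ := Multiset.card_eq_three.mp hs
      rw [act_apply]
      show symFun T {φ a, φ b, φ c} = symFun _ {a, b, c}
      rw [symFun_eq' hT, symFun_eq' hT', MultilinearMap.compLinearMap_apply]
      congr 1
      funext j
      fin_cases j <;> rfl
    · rw [Form.deg _ _ hs, Form.deg _ _ hs]
  show Form.act _ _ = _
  unfold toPt Form.act
  congr 1
  funext s
  exact this s

def idx (p : ℕ × ℕ × ℕ) : Unit × Multiset ℕ := ((), {p.1, p.2.1, p.2.2})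

theorem ev_toPt (T : MultilinearMap k (fun _ : Fin 3 => (ℕ →₀ k)) k) (hT : IsSymTri T)
    (P : MvPolynomial (ℕ × ℕ × ℕ) k) : ev (toPt T hT) (rename idx P) = coordEval T P := by
  rw [ev, aeval_rename, coordEval, aeval_eq_eval]
  congr 2
  funext p
  exact symFun_eq' hT _ _ _

theorem finite_VV {ι : Type} {d : ι → ℕ} (h : Noeth (Set.univ : Set (Pt k d)))
    {α : Type*} (f : α → MvPolynomial (ι × Multiset ℕ) k) (C : Set α) :
    ∃ F : Finset α, (F : Set α) ⊆ C ∧ VV d (f '' F) ⊆ VV d (f '' C) := by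
  classical
  obtain ⟨⟨W, hW⟩, ⟨F, hF, rfl⟩, hmin⟩ := (wf_of_noeth h).has_min
    {W | ∃ F : Finset α, (F : Set α) ⊆ C ∧ W.1 = VV d (f '' F)}
    ⟨⟨VV d (f '' (∅ : Finset α)), cs_VV _ _⟩, ∅, by simp, rfl⟩
  refine ⟨F, hF, ?_⟩
  rintro x hx φ _ ⟨P, hP, rfl⟩
  by_contra hc
  refine hmin ⟨VV d (f '' (insert P F : Finset α)), cs_VV _ _⟩ ⟨insert P F, ?_, rfl⟩ ?_
  · rw [Finset.coe_insert]
    exact Set.insert_subset hP hF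
  · refine lt_of_le_of_ne ?_ ?_
    · intro y hy φ Q hQ
      apply hy φ Q
      rw [Finset.coe_insert]
      exact Set.image_mono (Set.subset_insert _ _) hQ
    · intro heq
      have h1 := congrArg Subtype.val heq
      simp only at h1
      rw [← h1] at hx
      exact hc (hx φ _ ⟨P, by simp, rfl⟩)

end CubN

/-- Topological noetherianity of `P₃(k^∞)`: any `GL∞`-stable Zariski-closed subset of
the space of symmetric trilinear forms on `ℕ →₀ k` is cut out by finitely many
`GL∞`-orbits of coordinate polynomial equations. -/
theorem cubics_topologically_noetherian {k : Type*} [Field k] [IsAlgClosed k]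
    (h2 : (2 : k) ≠ 0) (h3 : (3 : k) ≠ 0)
    (Z : Set (MultilinearMap k (fun _ : Fin 3 => (ℕ →₀ k)) k))
    (hsym : ∀ T ∈ Z, IsSymTri T)
    (hstable : ∀ T ∈ Z, ∀ g : (ℕ →₀ k) ≃ₗ[k] (ℕ →₀ k), IsGLinf g →
      T.compLinearMap (fun _ => g.symm.toLinearMap) ∈ Z)
    (hclosed : ∃ C : Set (MvPolynomial (ℕ × ℕ × ℕ) k),
      Z = {T | IsSymTri T ∧ ∀ P ∈ C, coordEval T P = 0}) :
    ∃ (m : ℕ) (h : Fin m → MvPolynomial (ℕ × ℕ × ℕ) k),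
      Z = {T | IsSymTri T ∧
        ∀ (g : (ℕ →₀ k) ≃ₗ[k] (ℕ →₀ k)), IsGLinf g → ∀ i : Fin m,
          coordEval (T.compLinearMap (fun _ => g.symm.toLinearMap)) (h i) = 0} := by
  classical
  obtain ⟨C, hC⟩ := hclosed
  have : Infinite k := inferInstance
  have hnoeth : CubN.Noeth (Set.univ : Set (CubN.Pt k (fun _ : Unit => 3))) :=
    CubN.noeth_all h2 h3 _ Unit (fun _ => 3) (fun _ => le_rfl) rfl
  obtain ⟨F, hFC, hF⟩ := CubN.finite_VV hnoeth
    (fun P : MvPolynomial (ℕ × ℕ × ℕ) k => MvPolynomial.rename CubN.idx P) C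
  let E := F.equivFin
  refine ⟨F.card, fun i => (E.symm i).1, ?_⟩
  ext T
  constructor
  · intro hT
    refine ⟨hsym T hT, fun g hg i => ?_⟩
    have := hstable T hT g hg
    rw [hC] at this
    exact this.2 _ (hFC (E.symm i).2)
  · rintro ⟨hT, H⟩
    rw [hC]
    refine ⟨hT, fun P hP => ?_⟩
    have hx : CubN.toPt T hT ∈ CubN.VV (fun _ : Unit => 3)
        ((fun P : MvPolynomial (ℕ × ℕ × ℕ) k => MvPolynomial.rename CubN.idx P) '' F) := by
      rintro φ _ ⟨Q, hQ, rfl⟩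
      apply CubN.density
      intro g hg
      have hT' : IsSymTri (T.compLinearMap (fun _ => g.symm.toLinearMap)) := by
        intro σ v
        rw [MultilinearMap.compLinearMap_apply, MultilinearMap.compLinearMap_apply]
        exact hT σ (fun i => g.symm.toLinearMap (v i))
      rw [CubN.act_toPt T hT _ hT', CubN.ev_toPt]
      have := H g hg (E ⟨Q, hQ⟩)
      simpa using this
    have := hF hx LinearMap.id _ ⟨P, hP, rfl⟩
    rw [CubN.act_id] at this
    rw [← CubN.ev_toPt T hT]
    exact this
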